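/- arXiv:1703.10205 — 4 statements merged into one kernel-verified Lean document; each statement's English description precedes it below -/
import Mathlib

section
/- Let G = (V, E) be a finite regular undirected graph with normalized adjacency matrix A, let J be the |V| × |V| matrix whose entries are all 1/|V|, and let λ = ‖A − J‖ (operator norm). Let f_1, …, f_n : V → [0, 1], let μ_i = E_{v uniform in V}[f_i(v)], and let Φ = μ_1 + ⋯ + μ_n. Let (Y_1, …, Y_n) be the simple random walk on G (Y_1 uniform on V, each Y_{i+1} a uniformly random neighbor of Y_i), and let S_n = f_1(Y_1) + ⋯ + f_n(Y_n). Then for every real α with 1 < α < 1/λ, E[α^{S_n}] ≤ exp((α − 1) · Φ · (1 − λ)/(1 − αλ)). -/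
/-!
Since `α ^ x ≤ 1 + (α - 1) x` on `[0, 1]`, it is enough to bound the expectation of
`∏ i, (1 + (α - 1) f_i(Y_i))`. Conditioning on the first step of the walk (`sum_walk_eq`) writes
this expectation as the mean of the vector `transfer A n D` obtained from the all-ones vector by
applying `A` and multiplying by `D_i = 1 + (α - 1) f_i`, alternately.

For such a vector `P` with mean `Z`, split `A P = Z 1 + e` with `e = (A - J) P`, and let `g` bound
`‖e‖ / Z` (in the `L²` norm of the uniform measure). With `s² = μ` the mean of the next `f`,
Cauchy-Schwarz and `‖A - J‖ = λ` show that one more step gives (`step_bounds`)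
`Z ≤ Z' ≤ Z (1 + (α - 1) (s² + s g))` and allows `g' = α λ g + (α - 1) λ s`.
As `1 + x ≤ exp x`, it remains to bound the sum of the terms `s² + s g`. The quadratic potential
`g² / (2 (α - 1) λ)` does this: by `potential_step` each step contributes at most
`(1 + (α - 1) λ / (1 - α λ)) s² = (1 - λ) / (1 - α λ) * μ` plus the decrease of the potential,
which starts at `0`.
-/

open Finset

/-- The probability of a trajectory `y` of the simple random walk of length `n` on a
regular graph with normalized adjacency matrix `A`: the first vertex is uniform, and each
subsequent vertex is a uniformly random neighbor of the previous one. -/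
noncomputable def walkProb {V : Type*} [Fintype V] (A : Matrix V V ℝ) {n : ℕ}
    (y : Fin n → V) : ℝ :=
  if n = 0 then 1
  else (1 / (Fintype.card V : ℝ)) *
    ∏ i : Fin n, if h : (i : ℕ) + 1 < n then A (y i) (y ⟨(i : ℕ) + 1, h⟩) else 1

/-- Expectation of a function of the trajectory of the simple random walk. -/
noncomputable def walkExp {V : Type*} [Fintype V] (A : Matrix V V ℝ) {n : ℕ}
    (F : (Fin n → V) → ℝ) : ℝ :=
  ∑ y : Fin n → V, walkProb A y * F y

/-- The operator norm of a matrix with respect to the Euclidean norm. -/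
noncomputable def opNorm {N : Type*} [Fintype N] [DecidableEq N]
    (M : Matrix N N ℝ) : ℝ :=
  ‖LinearMap.toContinuousLinearMap (Matrix.toEuclideanLin M)‖

/-- The vector `D_0 A D_1 A ⋯ D_{n-1} A 1`, each `D_i` acting as a diagonal matrix. When `A` is
stochastic the final `A` does nothing, and starting from the all-ones vector covers `n = 0`. -/
noncomputable def transfer {V : Type*} [Fintype V] (A : Matrix V V ℝ) :
    (n : ℕ) → (Fin n → V → ℝ) → V → ℝ
  | 0, _ => fun _ => 1
  | n + 1, D => fun v => D 0 v * ∑ w, A v w * transfer A n (fun i => D i.succ) w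

lemma sum_cons_eq {V : Type*} [Fintype V] (n : ℕ) (F : (Fin (n + 1) → V) → ℝ) :
    ∑ y, F y = ∑ v, ∑ y : Fin n → V, F (Fin.cons v y) := by
  rw [← (Fin.consEquiv (fun _ : Fin (n + 1) => V)).sum_comp, Fintype.sum_prod_type]
  rfl

lemma walk_weight_cons {V : Type*} (A : Matrix V V ℝ) (n : ℕ) (v : V) (z : Fin (n + 1) → V) :
    (∏ i : Fin (n + 2), if h : (i : ℕ) + 1 < n + 2 then
      A ((Fin.cons v z : Fin (n + 2) → V) i) ((Fin.cons v z : Fin (n + 2) → V) ⟨(i : ℕ) + 1, h⟩)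
      else 1) =
    A v (z 0) * ∏ i : Fin (n + 1), if h : (i : ℕ) + 1 < n + 1 then
      A (z i) (z ⟨(i : ℕ) + 1, h⟩) else 1 := by
  rw [Fin.prod_univ_succ]
  congr 1
  refine Finset.prod_congr rfl fun i _ => ?_
  by_cases h : (i : ℕ) + 1 < n + 1
  · rw [dif_pos h, dif_pos (by simpa using h)]
    rfl
  · rw [dif_neg h, dif_neg (by simpa using h)]

/-- Expansion over the trajectories `y` of a walk that starts one step earlier, at `v`. -/
lemma sum_walk_eq {V : Type*} [Fintype V] (A : Matrix V V ℝ) (hrow : ∀ v, ∑ w, A v w = 1) :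
    ∀ (n : ℕ) (D : Fin n → V → ℝ) (v : V),
      ∑ y : Fin n → V,
        (∏ i : Fin (n + 1), if h : (i : ℕ) + 1 < n + 1 then
          A ((Fin.cons v y : Fin (n + 1) → V) i) ((Fin.cons v y : Fin (n + 1) → V) ⟨(i : ℕ) + 1, h⟩)
          else 1) * ∏ i, D i (y i)
      = ∑ w, A v w * transfer A n D w
  | 0, D, v => by simp [transfer, hrow]
  | n + 1, D, v => by
    rw [sum_cons_eq]
    refine Finset.sum_congr rfl fun w _ => ?_
    simp only [transfer]
    rw [← sum_walk_eq A hrow n (fun i => D i.succ) w, Finset.mul_sum, Finset.mul_sum]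
    refine Finset.sum_congr rfl fun y _ => ?_
    rw [walk_weight_cons, Fin.prod_univ_succ (fun i => D i _)]
    simp only [Fin.cons_zero, Fin.cons_succ]
    ring

lemma walkExp_prod_eq {V : Type*} [Fintype V] [Nonempty V] (A : Matrix V V ℝ)
    (hrow : ∀ v, ∑ w, A v w = 1) :
    ∀ (n : ℕ) (D : Fin n → V → ℝ),
      walkExp A (fun y => ∏ i, D i (y i)) = (∑ v, transfer A n D v) / (Fintype.card V : ℝ)
  | 0, D => by
    simp [walkExp, walkProb, transfer]
  | n + 1, D => by
    rw [walkExp, sum_cons_eq, Finset.sum_div]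
    refine Finset.sum_congr rfl fun v _ => ?_
    simp only [transfer]
    rw [← sum_walk_eq A hrow n (fun i => D i.succ) v, Finset.mul_sum, Finset.sum_div]
    refine Finset.sum_congr rfl fun y _ => ?_
    rw [walkProb, if_neg (Nat.succ_ne_zero n), Fin.prod_univ_succ (fun i => D i _)]
    simp only [Fin.cons_zero, Fin.cons_succ]
    ring

/-- The two sides differ by a nonnegative multiple of `((1 - b) g - c s)²`. -/
lemma potential_step (b c s g : ℝ) (hb0 : 0 ≤ b) (hb : b < 1) (hc : 0 < c) :
    s * g + (b * g + c * s) ^ 2 / (2 * c) ≤ g ^ 2 / (2 * c) + c / (1 - b) * s ^ 2 := by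
  have hr : 0 < 1 - b := by linarith
  have key : g ^ 2 / (2 * c) + c / (1 - b) * s ^ 2 - (s * g + (b * g + c * s) ^ 2 / (2 * c))
      = (1 + b) / (2 * c * (1 - b)) * ((1 - b) * g - c * s) ^ 2 := by
    field_simp
    ring
  have : 0 ≤ (1 + b) / (2 * c * (1 - b)) * ((1 - b) * g - c * s) ^ 2 := by positivity
  linarith

/-- The effect of one step `P ↦ D (A P)` on the mean and on the deviation `‖(A - J) P‖`. The
factor `t`, with `t ^ 2 = card V`, converts the norm of the uniform measure to the Euclidean
norm. -/
lemma step_bounds {V : Type*} [Fintype V] [DecidableEq V] [Nonempty V]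
    (A J : Matrix V V ℝ) (hA0 : ∀ u v, 0 ≤ A u v) (hrow : ∀ v, ∑ w, A v w = 1)
    (hcol : ∀ w, ∑ v, A v w = 1) (hJ : ∀ u v, J u v = 1 / (Fintype.card V : ℝ))
    (lam : ℝ) (hlam : lam = opNorm (A - J)) (α : ℝ) (hα : 1 < α)
    (f : V → ℝ) (hf : ∀ v, f v ∈ Set.Icc (0 : ℝ) 1)
    (P : V → ℝ) (hP : ∀ v, 0 ≤ P v) (Z t s g : ℝ) (hZ0 : 0 ≤ Z)
    (ht0 : 0 ≤ t) (hs0 : 0 ≤ s)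
    (ht : t ^ 2 = Fintype.card V) (hs : s ^ 2 = (∑ v, f v) / (Fintype.card V : ℝ))
    (hZ : Z = (∑ v, P v) / (Fintype.card V : ℝ))
    (hE : ‖WithLp.toLp 2 ((A - J).mulVec P)‖ ≤ t * g * Z)
    (P' : V → ℝ) (hP' : ∀ v, P' v = (1 + (α - 1) * f v) * ∑ w, A v w * P w)
    (Z' : ℝ) (hZ' : Z' = (∑ v, P' v) / (Fintype.card V : ℝ)) :
    (∀ v, 0 ≤ P' v) ∧ Z ≤ Z' ∧ Z' ≤ Z * (1 + (α - 1) * (s ^ 2 + s * g)) ∧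
      ‖WithLp.toLp 2 ((A - J).mulVec P')‖ ≤ t * (α * lam * g + (α - 1) * lam * s) * Z := by
  have hN : (0 : ℝ) < Fintype.card V := by exact_mod_cast Fintype.card_pos
  have hop : ∀ x : V → ℝ, ‖WithLp.toLp 2 ((A - J).mulVec x)‖ ≤ lam * ‖WithLp.toLp 2 x‖ := by
    intro x
    rw [hlam, opNorm]
    exact (LinearMap.toContinuousLinearMap (Matrix.toEuclideanLin (A - J))).le_opNorm
      (WithLp.toLp 2 x)
  have hlam0 : 0 ≤ lam := by rw [hlam]; exact norm_nonneg _
  set e : V → ℝ := (A - J).mulVec P with he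
  have hJx : ∀ (x : V → ℝ) v, J.mulVec x v = (∑ w, x w) / (Fintype.card V : ℝ) := by
    intro x v
    simp only [Matrix.mulVec, dotProduct, hJ, ← Finset.mul_sum]
    ring
  have hy : ∀ v, ∑ w, A v w * P w = Z + e v := by
    intro v
    rw [he, Matrix.sub_mulVec, Pi.sub_apply, hJx, ← hZ]
    simp [Matrix.mulVec, dotProduct]
  have hy0 : ∀ v, 0 ≤ ∑ w, A v w * P w :=
    fun v => Finset.sum_nonneg fun w _ => mul_nonneg (hA0 v w) (hP w)
  have hysum : ∑ v, ∑ w, A v w * P w = ∑ v, P v := by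
    rw [Finset.sum_comm]
    simp_rw [← Finset.sum_mul, hcol, one_mul]
  have hD1 : ∀ v, 1 ≤ 1 + (α - 1) * f v := fun v => by
    nlinarith [(hf v).1]
  have hDα : ∀ v, 1 + (α - 1) * f v ≤ α := fun v => by
    nlinarith [(hf v).2]
  have hfn : ‖WithLp.toLp 2 f‖ ≤ t * s := by
    refine abs_le_of_sq_le_sq' ?_ (by positivity) |>.2
    rw [EuclideanSpace.real_norm_sq_eq, mul_pow, ht, hs, mul_div_cancel₀ _ hN.ne']
    exact Finset.sum_le_sum fun v _ => by
      have := hf v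
      show f v ^ 2 ≤ f v
      nlinarith [this.1, this.2]
  have hfe : ∑ v, f v * e v ≤ (t * s) * (t * g * Z) := by
    have h := real_inner_le_norm (WithLp.toLp 2 e) (WithLp.toLp 2 f)
    have h2 : inner ℝ (WithLp.toLp 2 e) (WithLp.toLp 2 f) = ∑ v, f v * e v := by
      simp [PiLp.inner_apply]
    rw [h2, mul_comm ‖WithLp.toLp 2 e‖] at h
    exact h.trans (mul_le_mul hfn hE (norm_nonneg _) (by positivity))
  have hsum' : ∑ v, P' v = ∑ v, P v + (α - 1) * (Z * ∑ v, f v + ∑ v, f v * e v) := by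
    rw [← hysum, Finset.mul_sum, ← Finset.sum_add_distrib, Finset.mul_sum,
      ← Finset.sum_add_distrib]
    refine Finset.sum_congr rfl fun v _ => ?_
    rw [hP', hy]
    ring
  refine ⟨fun v => ?_, ?_, ?_, ?_⟩
  · rw [hP']
    exact mul_nonneg (by linarith [hD1 v]) (hy0 v)
  · rw [hZ, hZ', ← hysum]
    gcongr with v
    rw [hP']
    exact le_mul_of_one_le_left (hy0 v) (hD1 v)
  · have hPs : ∑ v, P v = Z * Fintype.card V := by rw [hZ]; field_simp
    have hfs : ∑ v, f v = s ^ 2 * Fintype.card V := by rw [hs]; field_simp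
    rw [hZ', div_le_iff₀ hN, hsum', hPs, hfs, ← ht]
    have : (α - 1) * ∑ v, f v * e v ≤ (α - 1) * ((t * s) * (t * g * Z)) :=
      mul_le_mul_of_nonneg_left hfe (by linarith)
    linarith
  · -- `A - J` kills constants, so the constant part `Z` of `D (Z + e)` can be dropped.
    have hE1 : (A - J).mulVec P' = (A - J).mulVec
        ((Z * (α - 1)) • f + fun v => (1 + (α - 1) * f v) * e v) := by
      have hsplit : P' = (fun _ => Z) +
          ((Z * (α - 1)) • f + fun v => (1 + (α - 1) * f v) * e v) := by
        funext v
        simp only [Pi.add_apply, Pi.smul_apply, smul_eq_mul]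
        rw [hP', hy]
        ring
      have hconst : (A - J).mulVec (fun _ => Z) = 0 := by
        funext v
        rw [Matrix.sub_mulVec, Pi.sub_apply, hJx]
        simp [Matrix.mulVec, dotProduct, ← Finset.sum_mul, hrow]
      rw [hsplit, Matrix.mulVec_add, hconst, zero_add]
    have hDe : ‖WithLp.toLp 2 (fun v => (1 + (α - 1) * f v) * e v)‖ ≤
        α * ‖WithLp.toLp 2 e‖ := by
      refine abs_le_of_sq_le_sq' ?_ (by positivity) |>.2
      rw [mul_pow, EuclideanSpace.real_norm_sq_eq, EuclideanSpace.real_norm_sq_eq,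
        Finset.mul_sum]
      refine Finset.sum_le_sum fun v _ => ?_
      show ((1 + (α - 1) * f v) * e v) ^ 2 ≤ α ^ 2 * e v ^ 2
      rw [mul_pow]
      have := hD1 v
      have := hDα v
      gcongr
    rw [hE1]
    refine (hop _).trans ?_
    have h1 : ‖WithLp.toLp 2 ((Z * (α - 1)) • f + fun v => (1 + (α - 1) * f v) * e v)‖ ≤
        Z * (α - 1) * (t * s) + α * (t * g * Z) := by
      rw [WithLp.toLp_add, WithLp.toLp_smul]
      refine (norm_add_le _ _).trans ?_
      have hc : 0 ≤ Z * (α - 1) := mul_nonneg hZ0 (by linarith)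
      rw [norm_smul, Real.norm_of_nonneg hc]
      refine add_le_add (mul_le_mul_of_nonneg_left hfn hc) (hDe.trans ?_)
      exact mul_le_mul_of_nonneg_left hE (by linarith)
    calc lam * _ ≤ lam * (Z * (α - 1) * (t * s) + α * (t * g * Z)) :=
          mul_le_mul_of_nonneg_left h1 hlam0
      _ = _ := by ring

/-- The bound on the mean of `transfer`, with the potential `g ^ 2 / (2 (α - 1) λ)` carried along
so that the induction closes. -/
lemma transfer_bound {V : Type*} [Fintype V] [DecidableEq V] [Nonempty V]
    (A J : Matrix V V ℝ) (hA0 : ∀ u v, 0 ≤ A u v) (hrow : ∀ v, ∑ w, A v w = 1)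
    (hcol : ∀ w, ∑ v, A v w = 1) (hJ : ∀ u v, J u v = 1 / (Fintype.card V : ℝ))
    (lam : ℝ) (hlam : lam = opNorm (A - J)) (α : ℝ) (hα : 1 < α) (hl0 : 0 < lam)
    (hαl : α * lam < 1) :
    ∀ (n : ℕ) (f : Fin n → V → ℝ) (_ : ∀ i v, f i v ∈ Set.Icc (0 : ℝ) 1),
      ∃ g Z : ℝ, 0 ≤ g ∧ 0 ≤ Z ∧
        Z = (∑ v, transfer A n (fun i v => 1 + (α - 1) * f i v) v) / (Fintype.card V : ℝ) ∧
        (∀ v, 0 ≤ transfer A n (fun i v => 1 + (α - 1) * f i v) v) ∧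
        ‖WithLp.toLp 2 ((A - J).mulVec (transfer A n (fun i v => 1 + (α - 1) * f i v)))‖ ≤
          √(Fintype.card V) * g * Z ∧
        Z ≤ Real.exp ((α - 1) * ((1 - lam) / (1 - α * lam) *
          (∑ i, (∑ v, f i v) / (Fintype.card V : ℝ)) - g ^ 2 / (2 * ((α - 1) * lam))))
  | 0, f, hf => by
    have hN : (0 : ℝ) < Fintype.card V := by exact_mod_cast Fintype.card_pos
    refine ⟨0, 1, le_rfl, zero_le_one, ?_, ?_, ?_, ?_⟩
    · simp [transfer]
    · simp [transfer]
    · have : (A - J).mulVec (transfer A 0 (fun i v => 1 + (α - 1) * f i v)) = 0 := by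
        funext v
        simp [transfer, Matrix.mulVec, dotProduct, hrow, hJ]
      rw [this]
      simp
    · simp
  | n + 1, f, hf => by
    obtain ⟨g, Z, hg, hZ0, hZ, hP, hE, hexp⟩ :=
      transfer_bound A J hA0 hrow hcol hJ lam hlam α hα hl0 hαl n (fun i => f i.succ)
        (fun i => hf i.succ)
    have hm0 : 0 ≤ (∑ v, f 0 v) / (Fintype.card V : ℝ) :=
      div_nonneg (Finset.sum_nonneg fun v _ => (hf 0 v).1) (Nat.cast_nonneg _)
    have hs := Real.sq_sqrt hm0
    have hs0 := Real.sqrt_nonneg ((∑ v, f 0 v) / (Fintype.card V : ℝ))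
    set s := √((∑ v, f 0 v) / (Fintype.card V : ℝ))
    have hα' : 0 < α - 1 := by linarith
    obtain ⟨hP', hZZ', hZ', hE'⟩ := step_bounds A J hA0 hrow hcol hJ lam hlam α hα (f 0) (hf 0)
      (transfer A n (fun i v => 1 + (α - 1) * f i.succ v)) hP Z √(Fintype.card V) s g hZ0
      (Real.sqrt_nonneg _) hs0 (Real.sq_sqrt (Nat.cast_nonneg _)) hs hZ hE
      (transfer A (n + 1) (fun i v => 1 + (α - 1) * f i v)) (fun v => rfl) _ rfl
    refine ⟨α * lam * g + (α - 1) * lam * s, _, by positivity, hZ0.trans hZZ', rfl, hP', ?_, ?_⟩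
    · exact hE'.trans (mul_le_mul_of_nonneg_left hZZ' (by positivity))
    · refine hZ'.trans ?_
      have h1 : 1 + (α - 1) * (s ^ 2 + s * g) ≤ Real.exp ((α - 1) * (s ^ 2 + s * g)) := by
        rw [add_comm]
        exact Real.add_one_le_exp _
      refine (mul_le_mul hexp h1 (by positivity) (Real.exp_nonneg _)).trans ?_
      rw [← Real.exp_add, ← mul_add, Fin.sum_univ_succ, ← hs]
      refine Real.exp_le_exp.2 (mul_le_mul_of_nonneg_left ?_ hα'.le)
      have hp := potential_step (α * lam) ((α - 1) * lam) s g (by positivity) hαl (by positivity)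
      have hC : (1 - lam) / (1 - α * lam) = 1 + (α - 1) * lam / (1 - α * lam) := by
        have : 1 - α * lam ≠ 0 := by linarith
        rw [add_comm, eq_comm, div_add_one this, div_left_inj' this]
        ring
      have hC2 : (1 - lam) / (1 - α * lam) * s ^ 2 =
          s ^ 2 + (α - 1) * lam / (1 - α * lam) * s ^ 2 := by
        rw [hC]
        ring
      rw [mul_add, hC2]
      linarith

theorem expander_mgf_bound
    {V : Type*} [Fintype V] [DecidableEq V] [Nonempty V]
    (G : SimpleGraph V) [DecidableRel G.Adj] (d : ℕ) (hd : 0 < d)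
    (hreg : G.IsRegularOfDegree d)
    (A : Matrix V V ℝ)
    (hA : ∀ u v, A u v = if G.Adj u v then (1 : ℝ) / d else 0)
    (J : Matrix V V ℝ) (hJ : ∀ u v, J u v = 1 / (Fintype.card V : ℝ))
    (lam : ℝ) (hlam : lam = opNorm (A - J))
    (n : ℕ) (f : Fin n → V → ℝ) (hf : ∀ i v, f i v ∈ Set.Icc (0 : ℝ) 1)
    (μ : Fin n → ℝ) (hμ : ∀ i, μ i = (∑ v, f i v) / (Fintype.card V : ℝ))
    (Φ : ℝ) (hΦ : Φ = ∑ i, μ i)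
    (α : ℝ) (hα1 : 1 < α) (hα2 : α < 1 / lam) :
    walkExp A (fun y => α ^ (∑ i, f i (y i))) ≤
      Real.exp ((α - 1) * Φ * ((1 - lam) / (1 - α * lam))) := by
  have hd' : (0 : ℝ) < d := by exact_mod_cast hd
  have hA0 : ∀ u v, 0 ≤ A u v := by
    intro u v
    rw [hA]
    split_ifs <;> positivity
  have hrow : ∀ v, ∑ w, A v w = 1 := by
    intro v
    simp_rw [hA]
    rw [← Finset.sum_filter, ← SimpleGraph.neighborFinset_eq_filter, Finset.sum_const,
      SimpleGraph.card_neighborFinset_eq_degree, hreg v, nsmul_eq_mul]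
    field_simp
  have hcol : ∀ w, ∑ v, A v w = 1 := by
    intro w
    rw [← hrow w]
    refine Finset.sum_congr rfl fun v _ => ?_
    simp only [hA, G.adj_comm v w]
  -- For `lam = 0`, `1 / lam = 0` and the hypotheses on `α` are contradictory.
  have hl0 : 0 < lam := by
    rcases (show 0 ≤ lam by rw [hlam]; exact norm_nonneg _).eq_or_lt with h | h
    · rw [← h] at hα2
      norm_num at hα2
      linarith
    · exact h
  have hαl : α * lam < 1 := (lt_div_iff₀ hl0).1 hα2
  have hα0 : 0 < α := by linarith
  have hα' : 0 < α - 1 := by linarith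
  obtain ⟨g, Z, -, -, hZ, -, -, hexp⟩ :=
    transfer_bound A J hA0 hrow hcol hJ lam hlam α hα1 hl0 hαl n f hf
  rw [← walkExp_prod_eq A hrow n] at hZ
  have hle : walkExp A (fun y => α ^ (∑ i, f i (y i))) ≤
      walkExp A (fun y => ∏ i, (1 + (α - 1) * f i (y i))) := by
    refine Finset.sum_le_sum fun y _ => mul_le_mul_of_nonneg_left ?_ ?_
    · beta_reduce
      rw [Real.rpow_sum_of_pos hα0]
      refine Finset.prod_le_prod (fun i _ => Real.rpow_nonneg hα0.le _) fun i _ => ?_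
      have h := rpow_one_add_le_one_add_mul_self (s := α - 1) (by linarith)
        (hf i (y i)).1 (hf i (y i)).2
      rw [add_sub_cancel] at h
      linarith
    · rw [walkProb]
      split_ifs
      · exact zero_le_one
      · refine mul_nonneg (by positivity) (Finset.prod_nonneg fun i _ => ?_)
        split_ifs
        · exact hA0 _ _
        · exact zero_le_one
  refine hle.trans ?_
  rw [← hZ]
  refine hexp.trans (Real.exp_le_exp.2 ?_)
  rw [hΦ, Finset.sum_congr rfl fun i _ => hμ i, mul_assoc]
  refine mul_le_mul_of_nonneg_left ?_ hα'.le
  have : 0 ≤ g ^ 2 / (2 * ((α - 1) * lam)) := by positivity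
  linarith
end

section
/- Let A ∈ ℝ^{N×N} be a symmetric doubly stochastic matrix (e.g., the normalized adjacency matrix of a regular undirected graph on N vertices), let J be the N × N matrix all of whose entries are 1/N, and let λ = ‖A − J‖. Let k ≥ 2, let d_1, …, d_{k−1} be positive integers, let u_1, …, u_k ∈ [0, 1]^N with U_i = diag(u_i), and for each i define T_{i,0} = (1 − λ^{d_i}) J and T_{i,1} = A^{d_i} − (1 − λ^{d_i}) J. Then for every s ∈ {0,1}^{k−1}, ‖U_1 T_{1,s_1} U_2 T_{2,s_2} ⋯ T_{k−1,s_{k−1}} U_k 𝟏‖_1 ≤ √(‖u_1‖_1 ‖u_k‖_1) · (∏_{i : s_i = 0} (1 − λ^{d_i}) √(‖u_i‖_1 ‖u_{i+1}‖_1)) · (∏_{i : s_i = 1} λ^{d_i}), where ‖v‖_1 = (|v_1| + ⋯ + |v_N|)/N. -/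
/-!
The bound follows by peeling the factors `U_i T_i` off from the left, while tracking two norms of
the partial product `W = U_0 T_0 ⋯ U_m 𝟏` at once: the normalized Euclidean norm satisfies
`‖W‖₂ ≤ C` and the normalized 1-norm satisfies `‖W‖₁ ≤ √‖u_0‖₁ · C`, where `C` is `√‖u_m‖₁` times
one factor per index (`chain_bound`). Both `‖u z‖₂ ≤ ‖z‖₂` and `‖u z‖₁ ≤ √‖u‖₁ ‖z‖₂` hold when `u`
takes values in `[0, 1]`, the latter by Cauchy–Schwarz.

* A factor `T` with `s = true` contracts `‖·‖₂` by `λ ^ d`: it preserves the orthogonal splitting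
  into constant and zero-sum vectors, acts as multiplication by `λ ^ d` on the former and as
  `A ^ d = (A - J) ^ d` on the latter (`sumsq_split_true_le`).
* A factor with `s = false` replaces a vector by `1 - λ ^ d` times its average, which is controlled
  by the 1-norm. That `1 - λ ^ d ≥ 0` holds because a doubly stochastic matrix, and hence `A - J`,
  is a contraction for the Euclidean norm (`opNorm_sub_le_one`).
-/

open Finset

/-- The normalized 1-norm of a vector: `(|v_1| + ⋯ + |v_N|)/N`. -/
noncomputable def norm1 {N : Type*} [Fintype N] (v : N → ℝ) : ℝ :=
  (∑ i, |v i|) / (Fintype.card N : ℝ)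

/-- The alternating product `U_0 T_0 U_1 T_1 ⋯ T_{m-1} U_m` of `m + 1` matrices `U_i`
with `m` matrices `T_i` interspersed between consecutive factors. -/
noncomputable def altProd {N : Type*} [Fintype N] [DecidableEq N] :
    (m : ℕ) → (Fin (m + 1) → Matrix N N ℝ) → (Fin m → Matrix N N ℝ) → Matrix N N ℝ
  | 0, U, _ => U 0
  | m + 1, U, T => U 0 * T 0 * altProd m (fun i => U i.succ) (fun i => T i.succ)

open Matrix

section

variable {N : Type*} [Fintype N]

/-- The average `(v_1 + ⋯ + v_N)/N`. -/
noncomputable def avg (v : N → ℝ) : ℝ := (∑ i, v i) / (Fintype.card N : ℝ)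

/-- The normalized Euclidean norm `√((v_1² + ⋯ + v_N²)/N)`. -/
noncomputable def norm2 (v : N → ℝ) : ℝ := Real.sqrt ((∑ i, v i ^ 2) / (Fintype.card N : ℝ))

/-! ### Elementary norm inequalities -/

lemma norm1_nonneg (v : N → ℝ) : 0 ≤ norm1 v := by
  unfold norm1; positivity

lemma norm2_nonneg (v : N → ℝ) : 0 ≤ norm2 v := Real.sqrt_nonneg _

lemma abs_avg_le (v : N → ℝ) : |avg v| ≤ norm1 v := by
  unfold avg norm1
  rw [abs_div, Nat.abs_cast]
  gcongr
  exact abs_sum_le_sum_abs _ _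

lemma norm2_le_sqrt_norm1 {u : N → ℝ} (hu : ∀ j, u j ∈ Set.Icc (0 : ℝ) 1) :
    norm2 u ≤ Real.sqrt (norm1 u) := by
  unfold norm2 norm1
  gcongr with i
  rw [abs_of_nonneg (hu i).1]
  nlinarith [(hu i).1, (hu i).2]

lemma norm2_mul_le {u : N → ℝ} (hu : ∀ j, u j ∈ Set.Icc (0 : ℝ) 1) (z : N → ℝ) :
    norm2 (fun i => u i * z i) ≤ norm2 z := by
  unfold norm2
  refine Real.sqrt_le_sqrt (div_le_div_of_nonneg_right (sum_le_sum fun i _ => ?_) (by positivity))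
  rw [mul_pow]
  have h : u i ^ 2 ≤ 1 := pow_le_one₀ (hu i).1 (hu i).2
  nlinarith [sq_nonneg (z i)]

/-- Cauchy–Schwarz for the normalized norms. -/
lemma norm1_mul_le (u z : N → ℝ) : norm1 (fun i => u i * z i) ≤ norm2 u * norm2 z := by
  unfold norm1 norm2
  rw [← Real.sqrt_mul (by positivity)]
  apply Real.le_sqrt_of_sq_le
  rw [div_pow, div_mul_div_comm, ← sq]
  gcongr
  have h := sum_mul_sq_le_sq_mul_sq univ (fun i => |u i|) (fun i => |z i|)
  simpa only [abs_mul, sq_abs] using h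

lemma norm1_smul (u : N → ℝ) (c : ℝ) : norm1 (fun i => u i * c) = norm1 u * |c| := by
  unfold norm1
  simp only [abs_mul, ← sum_mul]
  ring

lemma norm2_smul (u : N → ℝ) (c : ℝ) : norm2 (fun i => u i * c) = norm2 u * |c| := by
  unfold norm2
  simp only [mul_pow, ← sum_mul]
  rw [mul_div_right_comm, Real.sqrt_mul (by positivity), Real.sqrt_sq_eq_abs]

lemma norm2_le_of_sumsq_le {v w : N → ℝ} {r : ℝ} (hr : 0 ≤ r)
    (h : ∑ i, v i ^ 2 ≤ r ^ 2 * ∑ i, w i ^ 2) : norm2 v ≤ r * norm2 w := by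
  unfold norm2
  rw [← Real.sqrt_sq hr, ← Real.sqrt_mul (sq_nonneg _)]
  apply Real.sqrt_le_sqrt
  rw [← mul_div_assoc]
  gcongr

/-! ### The induction along the chain -/

/-- Abstract form of the bound: all that matters about `T i` is that it either multiplies the
average of its argument by `c i` or contracts the Euclidean norm by `r i`. -/
lemma chain_bound [DecidableEq N] (m : ℕ) :
    ∀ (u : Fin (m + 1) → N → ℝ) (_ : ∀ i j, u i j ∈ Set.Icc (0 : ℝ) 1)
      (s : Fin m → Bool) (c r : Fin m → ℝ) (_ : ∀ i, 0 ≤ c i) (_ : ∀ i, 0 ≤ r i)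
      (T : Fin m → Matrix N N ℝ)
      (_ : ∀ i, s i = false → ∀ x, T i *ᵥ x = fun _ => c i * avg x)
      (_ : ∀ i, s i = true → ∀ x, norm2 (T i *ᵥ x) ≤ r i * norm2 x),
      norm2 (altProd m (fun i => diagonal (u i)) T *ᵥ fun _ => (1 : ℝ)) ≤
          Real.sqrt (norm1 (u (Fin.last m))) * ∏ i, (if s i then r i else
            c i * Real.sqrt (norm1 (u i.castSucc) * norm1 (u i.succ))) ∧
      norm1 (altProd m (fun i => diagonal (u i)) T *ᵥ fun _ => (1 : ℝ)) ≤
          Real.sqrt (norm1 (u 0)) *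
          (Real.sqrt (norm1 (u (Fin.last m))) * ∏ i, (if s i then r i else
            c i * Real.sqrt (norm1 (u i.castSucc) * norm1 (u i.succ)))) := by
  induction m with
  | zero =>
    intro u hu s c r hc hr T hF hT
    have h : (altProd 0 (fun i => diagonal (u i)) T *ᵥ fun _ => (1 : ℝ)) = u 0 := by
      ext j
      simp [altProd, mulVec_diagonal]
    rw [h]
    simp only [univ_eq_empty, prod_empty, mul_one]
    exact ⟨norm2_le_sqrt_norm1 (hu 0), (Real.mul_self_sqrt (norm1_nonneg _)).ge⟩
  | succ m ih =>
    intro u hu s c r hc hr T hF hT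
    obtain ⟨ih2, ih1⟩ := ih (fun i => u i.succ) (fun i => hu i.succ) (fun i => s i.succ)
      (fun i => c i.succ) (fun i => r i.succ) (fun i => hc _) (fun i => hr _)
      (fun i => T i.succ) (fun i => hF _) (fun i => hT _)
    set W := altProd m (fun i => diagonal (u i.succ)) (fun i => T i.succ) *ᵥ
      fun _ => (1 : ℝ) with hW
    have h : (altProd (m + 1) (fun i => diagonal (u i)) T *ᵥ fun _ => (1 : ℝ)) =
        fun j => u 0 j * (T 0 *ᵥ W) j := by
      ext j
      simp only [altProd, ← mulVec_mulVec, mulVec_diagonal, hW]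
    rw [h, Fin.prod_univ_succ]
    simp only [Fin.castSucc_zero, ← Fin.succ_castSucc, Fin.succ_last, Fin.succ_zero_eq_one]
      at ih1 ih2 ⊢
    set P := ∏ i : Fin m, (if s i.succ then r i.succ else
            c i.succ * Real.sqrt (norm1 (u i.castSucc.succ) * norm1 (u i.succ.succ)))
    set L := Real.sqrt (norm1 (u (Fin.last (m + 1))))
    have hb := norm2_le_sqrt_norm1 (hu 0)
    cases hs : s 0 with
    | true =>
      have hT0 : norm2 (T 0 *ᵥ W) ≤ L * (r 0 * P) :=
        calc _ ≤ r 0 * norm2 W := hT 0 hs W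
          _ ≤ r 0 * (L * P) := mul_le_mul_of_nonneg_left ih2 (hr 0)
          _ = _ := by ring
      simp only [if_true]
      refine ⟨(norm2_mul_le (hu 0) _).trans hT0, (norm1_mul_le _ _).trans ?_⟩
      exact mul_le_mul hb hT0 (norm2_nonneg _) (Real.sqrt_nonneg _)
    | false =>
      rw [hF 0 hs W]
      simp only [Bool.false_eq_true, if_false]
      have ha : |c 0 * avg W| ≤ c 0 * (Real.sqrt (norm1 (u 1)) * (L * P)) := by
        rw [abs_mul, abs_of_nonneg (hc 0)]
        exact mul_le_mul_of_nonneg_left ((abs_avg_le W).trans ih1) (hc 0)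
      rw [norm2_smul, norm1_smul, Real.sqrt_mul (norm1_nonneg _)]
      constructor
      · calc _ ≤ Real.sqrt (norm1 (u 0)) * (c 0 * (Real.sqrt (norm1 (u 1)) * (L * P))) :=
              mul_le_mul hb ha (abs_nonneg _) (Real.sqrt_nonneg _)
          _ = _ := by ring
      · calc _ ≤ norm1 (u 0) * (c 0 * (Real.sqrt (norm1 (u 1)) * (L * P))) :=
              mul_le_mul_of_nonneg_left ha (norm1_nonneg _)
          _ = (Real.sqrt (norm1 (u 0)) * Real.sqrt (norm1 (u 0))) *
                (c 0 * (Real.sqrt (norm1 (u 1)) * (L * P))) := by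
              rw [Real.mul_self_sqrt (norm1_nonneg _)]
          _ = _ := by ring

/-! ### Doubly stochastic matrices and the operator norm -/

lemma sumsq_mulVec_le [DecidableEq N] (M : Matrix N N ℝ) (x : N → ℝ) :
    ∑ i, (M *ᵥ x) i ^ 2 ≤ opNorm M ^ 2 * ∑ i, x i ^ 2 := by
  have h := (LinearMap.toContinuousLinearMap (toEuclideanLin M)).le_opNorm (WithLp.toLp 2 x)
  have h2 := pow_le_pow_left₀ (norm_nonneg _) h 2
  rw [mul_pow, EuclideanSpace.real_norm_sq_eq, EuclideanSpace.real_norm_sq_eq] at h2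
  simpa [opNorm] using h2

/-- A doubly stochastic matrix is a Euclidean contraction: Cauchy–Schwarz (weighted by a row)
gives `(A x)_i² ≤ ∑ j, A i j x_j²`, and the columns sum to `1`. -/
lemma sumsq_stochastic_le (A : Matrix N N ℝ) (hnonneg : ∀ i j, 0 ≤ A i j)
    (hrow : ∀ i, ∑ j, A i j = 1) (hcol : ∀ j, ∑ i, A i j = 1) (x : N → ℝ) :
    ∑ i, (A *ᵥ x) i ^ 2 ≤ ∑ i, x i ^ 2 := by
  have h : ∀ i, (A *ᵥ x) i ^ 2 ≤ ∑ j, A i j * x j ^ 2 := fun i => by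
    have := sum_sq_le_sum_mul_sum_of_sq_le_mul univ (r := fun j => A i j * x j)
      (f := fun j => A i j) (g := fun j => A i j * x j ^ 2) (fun j _ => hnonneg i j)
      (fun j _ => mul_nonneg (hnonneg i j) (sq_nonneg _)) (fun j _ => le_of_eq (by ring))
    rwa [hrow, one_mul] at this
  calc _ ≤ ∑ i, ∑ j, A i j * x j ^ 2 := sum_le_sum fun i _ => h i
    _ = ∑ j, x j ^ 2 := by
      rw [sum_comm]
      exact sum_congr rfl fun j _ => by rw [← sum_mul, hcol, one_mul]

lemma sum_mulVec_of_col (A : Matrix N N ℝ) (hcol : ∀ j, ∑ i, A i j = 1) (x : N → ℝ) :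
    ∑ i, (A *ᵥ x) i = ∑ i, x i := by
  simp only [mulVec, dotProduct]
  rw [sum_comm]
  exact sum_congr rfl fun j _ => by rw [← sum_mul, hcol, one_mul]

lemma mulVec_const_of_row (A : Matrix N N ℝ) (hrow : ∀ i, ∑ j, A i j = 1) (a : ℝ) :
    (A *ᵥ fun _ => a) = fun _ => a := by
  ext i
  simp only [mulVec, dotProduct]
  rw [← sum_mul, hrow, one_mul]

lemma mulVec_J (J : Matrix N N ℝ) (hJ : ∀ u v, J u v = 1 / (Fintype.card N : ℝ)) (x : N → ℝ) :
    J *ᵥ x = fun _ => avg x := by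
  ext i
  simp only [mulVec, dotProduct, hJ, avg, ← mul_sum]
  ring

lemma sum_sub_avg [Nonempty N] (x : N → ℝ) : ∑ i, (x i - avg x) = 0 := by
  have : (Fintype.card N : ℝ) ≠ 0 := by positivity
  simp only [avg, sum_sub_distrib, sum_const, card_univ, nsmul_eq_mul]
  field_simp
  ring

/-- Pythagoras for a zero-sum vector and a constant one. -/
lemma sumsq_add_const (y : N → ℝ) (hy : ∑ i, y i = 0) (a : ℝ) :
    ∑ i, (y i + a) ^ 2 = ∑ i, y i ^ 2 + Fintype.card N * a ^ 2 := by
  simp only [add_sq, sum_add_distrib, ← sum_mul, ← mul_sum, hy, sum_const, card_univ,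
    nsmul_eq_mul]
  ring

lemma sumsq_decomp [Nonempty N] (x : N → ℝ) :
    ∑ i, x i ^ 2 = ∑ i, (x i - avg x) ^ 2 + Fintype.card N * avg x ^ 2 := by
  rw [← sumsq_add_const _ (sum_sub_avg x)]
  simp

lemma opNorm_nonneg [DecidableEq N] (M : Matrix N N ℝ) : 0 ≤ opNorm M := norm_nonneg _

lemma opNorm_sub_le_one [DecidableEq N] [Nonempty N] (A J : Matrix N N ℝ)
    (hnonneg : ∀ i j, 0 ≤ A i j)
    (hrow : ∀ i, ∑ j, A i j = 1) (hcol : ∀ j, ∑ i, A i j = 1)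
    (hJ : ∀ u v, J u v = 1 / (Fintype.card N : ℝ)) : opNorm (A - J) ≤ 1 := by
  refine ContinuousLinearMap.opNorm_le_bound _ zero_le_one fun x => ?_
  rw [one_mul]
  refine le_of_sq_le_sq ?_ (norm_nonneg _)
  rw [EuclideanSpace.real_norm_sq_eq, EuclideanSpace.real_norm_sq_eq]
  -- `(A - J) x = A (x - avg x)`, since `A` fixes constant vectors.
  have h : (A - J) *ᵥ x.ofLp = A *ᵥ fun i => x i - avg x.ofLp := by
    have h1 : (fun i => x i - avg x.ofLp) = x.ofLp - fun _ => avg x.ofLp := rfl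
    rw [h1, sub_mulVec, mulVec_sub, mulVec_J J hJ, mulVec_const_of_row A hrow]
  have h2 : ∀ i, (LinearMap.toContinuousLinearMap (toEuclideanLin (A - J)) x) i =
      (A *ᵥ fun i => x i - avg x.ofLp) i := fun i => by
    rw [← h]; rfl
  simp only [h2]
  refine (sumsq_stochastic_le A hnonneg hrow hcol _).trans ?_
  rw [sumsq_decomp x.ofLp]
  exact le_add_of_nonneg_right (by positivity)

/-- On zero-sum vectors `A` coincides with `A - J`, and zero-sum vectors are preserved, so the
operator norm of `A - J` can be iterated. -/
lemma pow_mulVec_zero_sum [DecidableEq N] (A J : Matrix N N ℝ) (hcol : ∀ j, ∑ i, A i j = 1)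
    (hJ : ∀ u v, J u v = 1 / (Fintype.card N : ℝ)) (d : ℕ) :
    ∀ y : N → ℝ, ∑ i, y i = 0 → ∑ i, ((A ^ d) *ᵥ y) i = 0 ∧
      ∑ i, ((A ^ d) *ᵥ y) i ^ 2 ≤ (opNorm (A - J) ^ d) ^ 2 * ∑ i, y i ^ 2 := by
  induction d with
  | zero => intro y hy; simp [hy]
  | succ d ih =>
    intro y hy
    have h0 : ∑ i, (A *ᵥ y) i = 0 := (sum_mulVec_of_col A hcol y).trans hy
    have h1 : (A - J) *ᵥ y = A *ᵥ y := by
      rw [sub_mulVec, mulVec_J J hJ]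
      ext i
      simp [avg, hy]
    have h2 := sumsq_mulVec_le (A - J) y
    rw [h1] at h2
    rw [pow_succ A, ← mulVec_mulVec]
    refine ⟨(ih _ h0).1, (ih _ h0).2.trans ?_⟩
    calc _ ≤ (opNorm (A - J) ^ d) ^ 2 * (opNorm (A - J) ^ 2 * ∑ i, y i ^ 2) := by gcongr
      _ = _ := by ring

lemma pow_mulVec_const [DecidableEq N] (A : Matrix N N ℝ) (hrow : ∀ i, ∑ j, A i j = 1)
    (a : ℝ) (d : ℕ) : ((A ^ d) *ᵥ fun _ => a) = fun _ => a := by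
  induction d with
  | zero => simp
  | succ d ih => rw [pow_succ, ← mulVec_mulVec, mulVec_const_of_row A hrow, ih]

/-- With `λ = ‖A - J‖`, the matrix `A ^ d - (1 - λ ^ d) J` has Euclidean norm at most `λ ^ d`. -/
lemma sumsq_split_true_le [DecidableEq N] [Nonempty N] (A J : Matrix N N ℝ)
    (hrow : ∀ i, ∑ j, A i j = 1) (hcol : ∀ j, ∑ i, A i j = 1)
    (hJ : ∀ u v, J u v = 1 / (Fintype.card N : ℝ)) (d : ℕ) (x : N → ℝ) :
    ∑ i, ((A ^ d - (1 - opNorm (A - J) ^ d) • J) *ᵥ x) i ^ 2 ≤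
      (opNorm (A - J) ^ d) ^ 2 * ∑ i, x i ^ 2 := by
  set l := opNorm (A - J) ^ d
  set y : N → ℝ := fun i => x i - avg x with hy
  obtain ⟨h0, h1⟩ := pow_mulVec_zero_sum A J hcol hJ d y (sum_sub_avg x)
  have hx : x = y + fun _ => avg x := by ext i; simp [hy]
  have hA : (A ^ d) *ᵥ x = (A ^ d) *ᵥ y + fun _ => avg x := by
    conv_lhs => rw [hx]
    rw [mulVec_add, pow_mulVec_const A hrow]
  have h : ∀ i, ((A ^ d - (1 - l) • J) *ᵥ x) i = ((A ^ d) *ᵥ y) i + l * avg x := fun i => by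
    rw [sub_mulVec, smul_mulVec, mulVec_J J hJ, hA]
    simp only [Pi.sub_apply, Pi.add_apply, Pi.smul_apply, smul_eq_mul]
    ring
  simp only [h]
  rw [sumsq_add_const _ h0, sumsq_decomp x, mul_add]
  refine add_le_add h1 (le_of_eq ?_)
  ring

end


theorem split_chain_norm1_bound {N : Type*} [Fintype N] [DecidableEq N] [Nonempty N]
    (A : Matrix N N ℝ) (hsymm : A.IsSymm)
    (hnonneg : ∀ i j, 0 ≤ A i j)
    (hrow : ∀ i, ∑ j, A i j = 1) (hcol : ∀ j, ∑ i, A i j = 1)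
    (J : Matrix N N ℝ) (hJ : ∀ u v, J u v = 1 / (Fintype.card N : ℝ))
    (lam : ℝ) (hlam : lam = opNorm (A - J))
    (m : ℕ) (dd : Fin (m + 1) → ℕ) (hdd : ∀ i, 0 < dd i)
    (u : Fin (m + 2) → N → ℝ) (hu : ∀ i j, u i j ∈ Set.Icc (0 : ℝ) 1)
    (s : Fin (m + 1) → Bool)
    (T : Fin (m + 1) → Matrix N N ℝ)
    (hT : ∀ i, T i = if s i then A ^ dd i - (1 - lam ^ dd i) • J
                     else (1 - lam ^ dd i) • J) :
    norm1 ((altProd (m + 1) (fun i => Matrix.diagonal (u i)) T).mulVec fun _ => (1 : ℝ)) ≤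
      Real.sqrt (norm1 (u 0) * norm1 (u (Fin.last (m + 1)))) *
        (∏ i ∈ univ.filter fun i => s i = false,
            (1 - lam ^ dd i) * Real.sqrt (norm1 (u i.castSucc) * norm1 (u i.succ))) *
        ∏ i ∈ univ.filter fun i => s i = true, lam ^ dd i := by
  have hl0 : 0 ≤ lam := hlam ▸ opNorm_nonneg _
  have hl1 : lam ≤ 1 := hlam ▸ opNorm_sub_le_one A J hnonneg hrow hcol hJ
  have key := (chain_bound (m + 1) u hu s (fun i => 1 - lam ^ dd i) (fun i => lam ^ dd i)
    (fun i => sub_nonneg.2 (pow_le_one₀ hl0 hl1)) (fun i => pow_nonneg hl0 _) T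
    (fun i hs x => by
      rw [hT i, hs, if_neg Bool.false_ne_true, smul_mulVec, mulVec_J J hJ]
      rfl)
    (fun i hs x => by
      rw [hT i, hs, if_pos rfl, hlam]
      exact norm2_le_of_sumsq_le (pow_nonneg (opNorm_nonneg _) _)
        (sumsq_split_true_le A J hrow hcol hJ (dd i) x))).2
  refine key.trans (le_of_eq ?_)
  rw [Real.sqrt_mul (norm1_nonneg _), prod_filter, prod_filter, mul_assoc, mul_assoc,
    ← prod_mul_distrib]
  congr 2
  refine prod_congr rfl fun i _ => ?_
  cases s i <;> simp
end

section
/- Let G = (V, E) be a finite regular undirected graph with normalized adjacency matrix A and λ = ‖A − J‖ with λ < 1. Let f_1, …, f_n : V → [0, 1] with μ_i = E_{v uniform}[f_i(v)] and Φ = μ_1 + ⋯ + μ_n. Let (Y_1, …, Y_n) be the simple random walk on G, Z_i = f_i(Y_i), and S_n = Z_1 + ⋯ + Z_n. Then for every positive integer q, E[S_n^q] ≤ Σ_{k=1}^{q} S(q, k) · k! · Σ_{i=0}^{k−1} C(k−1, i) · Φ^{i+1} λ^{k−i−1} / ((i+1)! (1−λ)^{k−i−1}), where S(q, k) denotes the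 Stirling number of the second kind and C(k−1, i) the binomial coefficient. -/
/-!
Write `Z_i = f_i(Y_i)` and let `e_k` be the `k`-th elementary symmetric polynomial of the `Z_i`.

Since `Z_i ∈ [0, 1]`, replacing `Z_i²` by `Z_i` only increases a monomial, so
`S_n ^ q ≤ ∑_k S(q, k) k! e_k` pointwise (`pow_sum_le`); it remains to show `E[e_k] ≤ R_k(Φ)` with
`R_0 = 1` and, for `k ≥ 1` and `r = λ / (1 - λ)`,
`R_k(t) = ∑_{i < k} C(k - 1, i) r ^ (k - 1 - i) t ^ (i + 1) / (i + 1)!`.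

Let `p_n^k(v) = E[e_k(Z_0, …, Z_{n-1}) 1{Y_n = v}]`. Then
`p_{n+1}^{k+1} = A (p_n^{k+1} + f_n p_n^k)`, the mass of `p_n^k` is `E[e_k(Z_0, …, Z_{n-1})]`
(`walkExp_elemSym`), and the deviation of `p_n^k` from a constant vector is acted upon by `A - J`.
By Cauchy-Schwarz and `‖f_n‖² ≤ |V| μ_n`, the masses `a_n^k` and the normalized norms `g_n^k` of
the deviations satisfy
* `a_{n+1}^{k+1} ≤ a_n^{k+1} + μ_n a_n^k + √μ_n g_n^k`,
* `g_{n+1}^{k+1} ≤ λ (g_n^{k+1} + g_n^k + √μ_n a_n^k)`.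

This recursion alone implies `a_n^k ≤ R_k(μ_0 + ⋯ + μ_{n-1})` (`scalar_bound`). Unrolled, it
produces weights `√(μ_a μ_b)` for the two ends `a < b` of a block of steps; bounding these by
`(μ_a + μ_b) / 2` leaves two sums which are each at most half of an integral of
`R_{k+1}' = ∑_{j ≥ 0} r ^ j R_{k-j}`, because the `R_k` are convex. The induction invariant carries the
second sum, weighted by the block starts, as a sequence `b`, together with the total `future`
contribution that `b` still has to make.
-/

open Finset

/-- Stirling numbers of the second kind: `stirling2 q k` is the number of
partitions of a `q`-element set into `k` nonempty blocks. -/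
def stirling2 : ℕ → ℕ → ℕ
  | 0, 0 => 1
  | 0, _ + 1 => 0
  | _ + 1, 0 => 0
  | q + 1, k + 1 => (k + 1) * stirling2 q (k + 1) + stirling2 q k

/-! ### Elementary symmetric polynomials and powers of the sum -/

/-- The `k`-th elementary symmetric polynomial of `z 0, …, z (n - 1)`, by recursion on the last
variable. -/
noncomputable def elemSym : (n : ℕ) → (Fin n → ℝ) → ℕ → ℝ
  | _, _, 0 => 1
  | 0, _, _ + 1 => 0
  | n + 1, z, k + 1 => elemSym n (fun i => z i.castSucc) (k + 1)
      + z (Fin.last n) * elemSym n (fun i => z i.castSucc) k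

lemma elemSym_zero (n : ℕ) (z : Fin n → ℝ) : elemSym n z 0 = 1 := by
  cases n <;> rfl

lemma elemSym_nonneg (n : ℕ) (z : Fin n → ℝ) (hz : ∀ i, 0 ≤ z i) (k : ℕ) :
    0 ≤ elemSym n z k := by
  induction n generalizing k with
  | zero => cases k <;> simp [elemSym]
  | succ n ih =>
    cases k with
    | zero => simp [elemSym]
    | succ k =>
      exact add_nonneg (ih _ (fun i => hz _) _) (mul_nonneg (hz _) (ih _ (fun i => hz _) _))

/-- `e₁ e_k ≤ (k + 1) e_{k+1} + k e_k`: multiplying by a new variable either creates a new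
squarefree monomial or squares a variable, which does not increase a product of numbers in
`[0, 1]`. -/
lemma sum_mul_elemSym_le (n : ℕ) (z : Fin n → ℝ) (hz : ∀ i, z i ∈ Set.Icc (0 : ℝ) 1) (k : ℕ) :
    (∑ i, z i) * elemSym n z k ≤ (k + 1) * elemSym n z (k + 1) + k * elemSym n z k := by
  induction n generalizing k with
  | zero => cases k <;> simp [elemSym]
  | succ n ih =>
    have ih' := ih (fun i => z i.castSucc) (fun i => hz _)
    have h0 := elemSym_nonneg n (fun i => z i.castSucc) (fun i => (hz _).1)
    obtain ⟨hl0, hl1⟩ := hz (Fin.last n)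
    rw [Fin.sum_univ_castSucc]
    cases k with
    | zero =>
      have := ih' 0
      simp only [elemSym, elemSym_zero] at this ⊢
      push_cast at this ⊢
      linarith
    | succ k =>
      have h1 := ih' (k + 1)
      have h2 := mul_le_mul_of_nonneg_left (ih' k) hl0
      have h3 : z (Fin.last n) * z (Fin.last n) * elemSym n (fun i => z i.castSucc) k
          ≤ z (Fin.last n) * elemSym n (fun i => z i.castSucc) k :=
        mul_le_mul_of_nonneg_right (by nlinarith) (h0 k)
      simp only [elemSym]
      push_cast at h1 h2 ⊢
      nlinarith

lemma pow_sum_le (n : ℕ) (z : Fin n → ℝ) (hz : ∀ i, z i ∈ Set.Icc (0 : ℝ) 1) (q : ℕ) :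
    (∑ i, z i) ^ q ≤
      ∑ k ∈ range (q + 1), (stirling2 q k : ℝ) * (Nat.factorial k : ℝ) * elemSym n z k := by
  have hbig : ∀ q k, q < k → stirling2 q k = 0 := by
    intro q
    induction q with
    | zero => intro k hk; cases k with
      | zero => omega
      | succ k => rfl
    | succ q ih => intro k hk; cases k with
      | zero => omega
      | succ k => simp [stirling2, ih (k + 1) (by omega), ih k (by omega)]
  have hS : 0 ≤ ∑ i, z i := sum_nonneg fun i _ => (hz i).1
  induction q with
  | zero => simp [stirling2, elemSym_zero]
  | succ q ih =>
    have hstep : (∑ i, z i) ^ (q + 1) ≤ ∑ k ∈ range (q + 1), (stirling2 q k : ℝ) *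
        (Nat.factorial k : ℝ) * ((k + 1) * elemSym n z (k + 1) + k * elemSym n z k) := by
      rw [pow_succ]
      refine (mul_le_mul_of_nonneg_right ih hS).trans ?_
      rw [sum_mul]
      refine sum_le_sum fun k _ => ?_
      have := mul_le_mul_of_nonneg_left (sum_mul_elemSym_le n z hz k)
        (by positivity : (0 : ℝ) ≤ (stirling2 q k : ℝ) * (Nat.factorial k : ℝ))
      linarith
    refine hstep.trans (le_of_eq ?_)
    simp only [mul_add, sum_add_distrib]
    rw [sum_range_succ' _ (q + 1)]
    have e2 : ∑ k ∈ range (q + 1), (stirling2 q k : ℝ) * (Nat.factorial k : ℝ)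
          * (k * elemSym n z k)
        = ∑ k ∈ range (q + 1), (stirling2 q (k + 1) : ℝ) * (Nat.factorial (k + 1) : ℝ)
          * (((k + 1 : ℕ) : ℝ) * elemSym n z (k + 1)) := by
      rw [sum_range_succ', sum_range_succ _ q, hbig q (q + 1) (by omega)]
      simp
    rw [e2, ← sum_add_distrib]
    simp only [stirling2, Nat.cast_zero, zero_mul, add_zero]
    refine sum_congr rfl fun k _ => ?_
    rw [Nat.factorial_succ]
    push_cast
    ring

/-! ### The bounding polynomials -/

/-- The bound `R_k(t)` for the expectation of the `k`-th elementary symmetric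
polynomial, where `t` is the total mean and `r = λ / (1 - λ)`. -/
noncomputable def momBd (r t : ℝ) : ℕ → ℝ
  | 0 => 1
  | k + 1 => ∑ i ∈ range (k + 1),
      (Nat.choose k i : ℝ) * r ^ (k - i) * (t ^ (i + 1) / (Nat.factorial (i + 1) : ℝ))

/-- The derivative of `R_{k+1}` in `t`. -/
noncomputable def momBdDeriv (r t : ℝ) (k : ℕ) : ℝ :=
  ∑ i ∈ range (k + 1),
    (Nat.choose k i : ℝ) * r ^ (k - i) * (t ^ i / (Nat.factorial i : ℝ))

/-- The sum `∑_{j ≥ 1} r ^ j R_{k-j}(t)`, in closed form. -/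
noncomputable def momTail (r t : ℝ) : ℕ → ℝ
  | 0 => 0
  | k + 1 => r * momBdDeriv r t k

lemma momBd_add_momTail (r t : ℝ) (k : ℕ) :
    momBd r t k + momTail r t k = momBdDeriv r t k := by
  cases k with
  | zero => simp [momBd, momTail, momBdDeriv]
  | succ k =>
    simp only [momBd, momTail, momBdDeriv]
    rw [sum_range_succ' _ (k + 1)]
    have h : r * ∑ i ∈ range (k + 1),
          (Nat.choose k i : ℝ) * r ^ (k - i) * (t ^ i / (Nat.factorial i : ℝ))
        = ∑ i ∈ range (k + 1), (Nat.choose k (i + 1) : ℝ) * r ^ (k - i)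
            * (t ^ (i + 1) / (Nat.factorial (i + 1) : ℝ)) + r ^ (k + 1) := by
      rw [sum_range_succ', sum_range_succ _ k, Nat.choose_succ_self, mul_add, mul_sum]
      simp only [Nat.cast_zero, zero_mul, add_zero]
      congr 1
      · refine sum_congr rfl fun i hi => ?_
        have : k - i = (k - (i + 1)) + 1 := by have := mem_range.1 hi; omega
        rw [this, pow_succ]
        ring
      · simp [pow_succ, mul_comm]
    rw [h, ← add_assoc, ← sum_add_distrib]
    simp only [Nat.choose_zero_right, Nat.cast_one, one_mul, Nat.sub_zero, pow_zero,
      Nat.factorial_zero, div_one, mul_one]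
    congr 1
    refine sum_congr rfl fun i hi => ?_
    rw [Nat.choose_succ_succ, Nat.add_sub_add_right]
    push_cast
    ring

lemma momBdDeriv_nonneg {r t : ℝ} (hr : 0 ≤ r) (ht : 0 ≤ t) (k : ℕ) :
    0 ≤ momBdDeriv r t k := by
  unfold momBdDeriv
  positivity

lemma momTail_nonneg {r t : ℝ} (hr : 0 ≤ r) (ht : 0 ≤ t) (k : ℕ) : 0 ≤ momTail r t k := by
  cases k with
  | zero => simp [momTail]
  | succ k => exact mul_nonneg hr (momBdDeriv_nonneg hr ht k)

lemma momTail_mono {r t y : ℝ} (hr : 0 ≤ r) (ht : 0 ≤ t) (hy : 0 ≤ y) (k : ℕ) :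
    momTail r t k ≤ momTail r (t + y) k := by
  cases k with
  | zero => simp [momTail]
  | succ k =>
    refine mul_le_mul_of_nonneg_left (sum_le_sum fun i _ => ?_) hr
    have : t ≤ t + y := by linarith
    gcongr

/-- Convexity of `R_{k+1}` on `[0, ∞)`: the graph lies above its tangent at `t`. -/
lemma momBd_tangent {r t y : ℝ} (hr : 0 ≤ r) (ht : 0 ≤ t) (hy : 0 ≤ y) (k : ℕ) :
    momBd r t (k + 1) + y * momBdDeriv r t k ≤ momBd r (t + y) (k + 1) := by
  have hpow : ∀ i : ℕ, t ^ (i + 1) + (i + 1) * (t ^ i * y) ≤ (t + y) ^ (i + 1) := by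
    intro i
    induction i with
    | zero => simp
    | succ i ih =>
      have h1 := mul_le_mul_of_nonneg_right ih (by linarith : 0 ≤ t + y)
      have h2 : 0 ≤ ((i : ℝ) + 1) * (t ^ i * y) * y := by positivity
      rw [pow_succ (t + y) (i + 1)]
      refine le_trans ?_ h1
      push_cast
      have e : (t ^ (i + 1) + ((i : ℝ) + 1) * (t ^ i * y)) * (t + y)
        = t ^ (i + 1 + 1) + ((i : ℝ) + 1 + 1) * (t ^ (i + 1) * y)
          + ((i : ℝ) + 1) * (t ^ i * y) * y := by ring
      linarith
  simp only [momBd, momBdDeriv]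
  rw [mul_sum, ← sum_add_distrib]
  refine sum_le_sum fun i _ => ?_
  have hf : (0 : ℝ) < Nat.factorial i := by exact_mod_cast Nat.factorial_pos i
  have key : t ^ (i + 1) / (Nat.factorial (i + 1) : ℝ) + y * (t ^ i / (Nat.factorial i : ℝ))
      ≤ (t + y) ^ (i + 1) / (Nat.factorial (i + 1) : ℝ) := by
    have e : y * (t ^ i / (Nat.factorial i : ℝ))
        = ((i + 1) * (t ^ i * y)) / (Nat.factorial (i + 1) : ℝ) := by
      rw [Nat.factorial_succ]; push_cast; field_simp
    rw [e, ← add_div]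
    exact div_le_div_of_nonneg_right (hpow i) (by positivity)
  have := mul_le_mul_of_nonneg_left key
    (by positivity : 0 ≤ (Nat.choose k i : ℝ) * r ^ (k - i))
  linarith

/-! ### The scalar recursion -/

/-- Solution of `(1 - λ) T_{k+1} = b_{k+1} + λ T_k`, `T_0 = 0`. It is the total of all present
and future values of a quantity that starts at `b` (with `b 0 = 0`) and evolves by `b_k ↦ λ (b_k + b_{k-1})`. -/
noncomputable def future (lam : ℝ) (b : ℕ → ℝ) : ℕ → ℝ
  | 0 => 0
  | k + 1 => (b (k + 1) + lam * future lam b k) / (1 - lam)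

lemma future_nonneg {lam : ℝ} (h0 : 0 ≤ lam) (h1 : lam < 1) {b : ℕ → ℝ} (hb : ∀ k, 0 ≤ b k)
    (k : ℕ) : 0 ≤ future lam b k := by
  have : 0 < 1 - lam := by linarith
  induction k with
  | zero => simp [future]
  | succ k ih => have := hb (k + 1); simp only [future]; positivity

/-- The scalar recursion satisfied by the expectations `a n k` of the elementary symmetric
polynomials and the normalized deviations `g n k` from uniformity implies the bound `R_k`. -/
lemma scalar_bound {lam : ℝ} (h0 : 0 ≤ lam) (h1 : lam < 1) (a g : ℕ → ℕ → ℝ) (m : ℕ → ℝ)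
    (hm : ∀ n, 0 ≤ m n) (ha : ∀ n k, 0 ≤ a n k) (ha0 : ∀ n, a n 0 = 1)
    (ha1 : ∀ k, a 0 (k + 1) = 0) (hg0 : ∀ n, g n 0 = 0) (hg1 : ∀ k, g 0 k = 0)
    (hg : ∀ n k, g (n + 1) (k + 1) ≤ lam * (g n (k + 1) + g n k + a n k * √(m n)))
    (haS : ∀ n k, a (n + 1) (k + 1) ≤ a n (k + 1) + m n * a n k + √(m n) * g n k)
    (n k : ℕ) : a n k ≤ momBd (lam / (1 - lam)) (∑ i ∈ range n, m i) k := by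
  have hl : 0 < 1 - lam := by linarith
  set r := lam / (1 - lam) with hr
  have hr0 : 0 ≤ r := by positivity
  have hrl : (1 - lam) * r = lam := by rw [hr]; field_simp
  -- `b` collects the part of the deviation weighted by the means at the block starts.
  have main : ∀ n, ∃ b : ℕ → ℝ, (∀ k, 0 ≤ b k) ∧ b 0 = 0 ∧
      (∀ k s, 0 ≤ s → 2 * (s * g n k) ≤ s ^ 2 * momTail r (∑ i ∈ range n, m i) k + b k) ∧
      (∀ k, 2 * a n (k + 1) + future lam b k ≤ 2 * momBd r (∑ i ∈ range n, m i) (k + 1)) := by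
    intro n
    induction n with
    | zero =>
      refine ⟨fun _ => 0, fun _ => le_rfl, rfl, ?_, ?_⟩
      · intro k s hs
        rw [hg1]
        have := momTail_nonneg hr0 (by simp : (0 : ℝ) ≤ ∑ i ∈ range 0, m i) k
        have : 0 ≤ s ^ 2 * momTail r (∑ i ∈ range 0, m i) k := by positivity
        simpa using this
      · intro k
        have : future lam (fun _ => 0) k = 0 := by
          induction k with
          | zero => rfl
          | succ k ih => simp [future, ih]
        rw [this, ha1]
        simp [momBd]
    | succ n ih =>
      obtain ⟨b, hb, hb0, hgb, hab⟩ := ih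
      have ht : 0 ≤ ∑ i ∈ range n, m i := sum_nonneg fun i _ => hm i
      rw [sum_range_succ]
      set t := ∑ i ∈ range n, m i with ht'
      have hle : ∀ k, a n k ≤ momBd r t k := by
        intro k
        cases k with
        | zero => rw [ha0]; rfl
        | succ k => have := hab k; have := future_nonneg h0 h1 hb k; linarith
      have htail : ∀ k, (1 - lam) * momTail r t (k + 1)
          = lam * (momTail r t k + momBd r t k) := by
        intro k
        rw [add_comm (momTail r t k), momBd_add_momTail]
        simp only [momTail]
        rw [← mul_assoc, hrl]
      let b' : ℕ → ℝ := fun k => match k with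
        | 0 => 0
        | k + 1 => lam * (b (k + 1) + b k + a n k * m n)
      have hfut : ∀ k, future lam b' k ≤ future lam b k - b k + m n * momTail r t k := by
        intro k
        induction k with
        | zero => simp [future, momTail, hb0]
        | succ k ih =>
          have e1 : (1 - lam) * future lam b (k + 1) = b (k + 1) + lam * future lam b k := by
            simp only [future]; field_simp
          have e2 : (1 - lam) * future lam b' (k + 1)
              = lam * (b (k + 1) + b k + a n k * m n) + lam * future lam b' k := by
            simp only [future, b']; field_simp
          have h3 := mul_le_mul_of_nonneg_left ih h0
          have h4 : lam * (a n k * m n) ≤ lam * (momBd r t k * m n) :=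
            mul_le_mul_of_nonneg_left (mul_le_mul_of_nonneg_right (hle k) (hm n)) h0
          have h5 := congrArg (fun x => m n * x) (htail k)
          refine le_of_mul_le_mul_left ?_ hl
          linarith
      refine ⟨b', ?_, rfl, ?_, ?_⟩
      · intro k
        cases k with
        | zero => exact le_rfl
        | succ k =>
          have := hb (k + 1); have := hb k; have := ha n k; have := hm n
          simp only [b']; positivity
      · intro k s hs
        cases k with
        | zero => rw [hg0]; simp [momTail, b']
        | succ k =>
          have h2 := mul_le_mul_of_nonneg_left (hg n k) hs
          have h3 := mul_le_mul_of_nonneg_left (hgb (k + 1) s hs) h0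
          have h4 := mul_le_mul_of_nonneg_left (hgb k s hs) h0
          -- the weighted arithmetic-geometric mean inequality `2 s √m ≤ s² + m`
          have h5 : 2 * (s * √(m n)) ≤ s ^ 2 + m n := by
            nlinarith [Real.sq_sqrt (hm n), sq_nonneg (s - √(m n))]
          have h6 := mul_le_mul_of_nonneg_left h5 (mul_nonneg h0 (ha n k))
          have h7 := mul_le_mul_of_nonneg_left (hle k) (mul_nonneg h0 (sq_nonneg s))
          have h8 := mul_le_mul_of_nonneg_left (momTail_mono hr0 ht (hm n) (k + 1)) (sq_nonneg s)
          have h9 := congrArg (fun x => s ^ 2 * x) (htail k)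
          simp only [b']
          linarith
      · intro k
        have h2 := hgb k (√(m n)) (Real.sqrt_nonneg _)
        rw [Real.sq_sqrt (hm n)] at h2
        have h3 := mul_le_mul_of_nonneg_left (hle k) (hm n)
        have h4 := momBd_tangent hr0 ht (hm n) k
        rw [← momBd_add_momTail] at h4
        have := hfut k
        have := haS n k
        have := hab k
        linarith
  obtain ⟨b, hb, -, -, hab⟩ := main n
  cases k with
  | zero => rw [ha0]; rfl
  | succ k => have := hab k; have := future_nonneg h0 h1 hb k; linarith

/-! ### The walk and its spectral gap -/

/-- Unnormalized distribution vectors of the walk weighted by elementary symmetric polynomials: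
`wvec A f n k v = E[e_k(f 0 (Y_0), …, f (n - 1) (Y_{n-1})) · 1{Y_n = v}]`, positions being
numbered from `0` and `A` being the (symmetric) transition matrix. -/
noncomputable def wvec {V : Type*} [Fintype V] (A : Matrix V V ℝ) (f : ℕ → V → ℝ) :
    ℕ → ℕ → V → ℝ
  | 0, 0 => fun _ => 1 / (Fintype.card V : ℝ)
  | 0, _ + 1 => 0
  | n + 1, 0 => A.mulVec (wvec A f n 0)
  | n + 1, k + 1 => A.mulVec (wvec A f n (k + 1) + f n * wvec A f n k)

section Walk

variable {V : Type*} [Fintype V]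

lemma walkProb_snoc (A : Matrix V V ℝ) (n : ℕ) (y : Fin (n + 1) → V) (v : V) :
    walkProb A (Fin.snoc y v : Fin (n + 2) → V) = walkProb A y * A (y (Fin.last n)) v := by
  simp only [walkProb, Nat.succ_ne_zero, if_false, mul_assoc]
  congr 1
  rw [Fin.prod_univ_castSucc, Fin.prod_univ_castSucc, Fin.prod_univ_castSucc (n := n)]
  have hlast : (Fin.snoc y v : Fin (n + 2) → V) ⟨n + 1, by omega⟩ = v :=
    Fin.snoc_last (α := fun _ => V) v y
  have hy : ∀ (i : ℕ) (h : i < n + 1), (Fin.snoc y v : Fin (n + 2) → V) ⟨i, by omega⟩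
      = y ⟨i, h⟩ := fun i h => Fin.snoc_castSucc (α := fun _ => V) v y ⟨i, h⟩
  have hs : ∀ i : Fin (n + 1), (Fin.snoc y v : Fin (n + 2) → V) i.castSucc = y i :=
    fun i => Fin.snoc_castSucc (α := fun _ => V) v y i
  simp only [Fin.val_castSucc, Fin.val_last, lt_irrefl, dite_false, mul_one, hs]
  rw [dif_pos (by omega), hlast]
  congr 1
  refine prod_congr rfl fun i _ => ?_
  rw [dif_pos (by omega), dif_pos (by omega), hy]

lemma sum_snoc (n : ℕ) (F : (Fin (n + 1) → V) → ℝ) :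
    ∑ y, F y = ∑ y : Fin n → V, ∑ v, F (Fin.snoc y v : Fin (n + 1) → V) := by
  rw [← (Fin.snocEquiv (fun _ : Fin (n + 1) => V)).sum_comp, Fintype.sum_prod_type_right]
  rfl

/-- `wvec` has the probabilistic meaning stated in its docstring, tested against `w`. -/
lemma walk_elemSym (A : Matrix V V ℝ) (hsym : ∀ u v, A u v = A v u) (f : ℕ → V → ℝ)
    (n k : ℕ) (w : V → ℝ) :
    ∑ y : Fin (n + 1) → V, walkProb A y *
        (elemSym n (fun i => f i (y i.castSucc)) k * w (y (Fin.last n)))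
      = ∑ v, wvec A f n k v * w v := by
  induction n generalizing k w with
  | zero =>
    rw [← (Equiv.funUnique (Fin 1) V).symm.sum_comp]
    cases k <;> simp [walkProb, elemSym, wvec]
  | succ n ih =>
    have hmul : ∀ x : V → ℝ, ∑ v, A.mulVec x v * w v = ∑ u, x u * ∑ v, A u v * w v := by
      intro x
      simp only [Matrix.mulVec, dotProduct, sum_mul, mul_sum]
      rw [sum_comm]
      refine sum_congr rfl fun u _ => sum_congr rfl fun v _ => ?_
      rw [hsym v u]; ring
    have hs : ∀ (y : Fin (n + 1) → V) (v : V) (i : Fin (n + 1)),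
        (Fin.snoc y v : Fin (n + 2) → V) i.castSucc = y i :=
      fun y v i => Fin.snoc_castSucc (α := fun _ => V) v y i
    have hl : ∀ (y : Fin (n + 1) → V) (v : V),
        (Fin.snoc y v : Fin (n + 2) → V) (Fin.last (n + 1)) = v :=
      fun y v => Fin.snoc_last (α := fun _ => V) v y
    rw [sum_snoc]
    simp only [walkProb_snoc, hl, hs]
    have hpull : ∀ (y : Fin (n + 1) → V) (c : ℝ),
        ∑ v, walkProb A y * A (y (Fin.last n)) v * (c * w v)
        = walkProb A y * (c * ∑ v, A (y (Fin.last n)) v * w v) := by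
      intro y c
      simp only [mul_sum]
      exact sum_congr rfl fun v _ => by ring
    simp only [hpull]
    cases k with
    | zero =>
      have := ih 0 (fun u => ∑ v, A u v * w v)
      simp only [elemSym_zero] at this ⊢
      rw [this, wvec, hmul]
    | succ k =>
      rw [wvec, hmul]
      simp only [Pi.add_apply, Pi.mul_apply, add_mul, sum_add_distrib]
      rw [← ih (k + 1) (fun u => ∑ v, A u v * w v)]
      have h2 := ih k (fun u => f n u * ∑ v, A u v * w v)
      have h3 : ∑ u, f n u * wvec A f n k u * ∑ v, A u v * w v
          = ∑ u, wvec A f n k u * (f n u * ∑ v, A u v * w v) :=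
        sum_congr rfl fun u _ => by ring
      rw [h3, ← h2, ← sum_add_distrib]
      refine sum_congr rfl fun y _ => ?_
      simp only [elemSym, Fin.val_castSucc, Fin.val_last]
      ring

lemma sum_mulVec (A : Matrix V V ℝ) (hcol : ∀ v, ∑ u, A u v = 1) (x : V → ℝ) :
    ∑ u, A.mulVec x u = ∑ v, x v := by
  simp only [Matrix.mulVec, dotProduct]
  rw [sum_comm]
  simp only [← sum_mul, hcol, one_mul]

lemma walkExp_elemSym [Nonempty V] (A : Matrix V V ℝ) (hsym : ∀ u v, A u v = A v u)
    (hcol : ∀ v, ∑ u, A u v = 1) (f : ℕ → V → ℝ) (n k : ℕ) :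
    walkExp A (fun y => elemSym n (fun i => f i (y i)) k) = ∑ v, wvec A f n k v := by
  have hc : (Fintype.card V : ℝ) ≠ 0 := by exact_mod_cast Fintype.card_ne_zero
  unfold walkExp
  cases n with
  | zero => cases k <;> simp [walkProb, elemSym, wvec, hc]
  | succ n =>
    cases k with
    | zero =>
      have := walk_elemSym A hsym f n 0 1
      simp only [elemSym_zero, Pi.one_apply, mul_one] at this ⊢
      rw [this, wvec, sum_mulVec A hcol]
    | succ k =>
      rw [wvec, sum_mulVec A hcol]
      simp only [Pi.add_apply, Pi.mul_apply, sum_add_distrib]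
      have h1 := walk_elemSym A hsym f n (k + 1) 1
      have h2 := walk_elemSym A hsym f n k (f n)
      simp only [Pi.one_apply, mul_one] at h1
      have h3 : ∑ u, f n u * wvec A f n k u = ∑ u, wvec A f n k u * f n u :=
        sum_congr rfl fun u _ => by ring
      rw [h3, ← h1, ← h2, ← sum_add_distrib]
      refine sum_congr rfl fun y _ => ?_
      simp only [elemSym, Fin.val_castSucc, Fin.val_last]
      ring

lemma wvec_nonneg (A : Matrix V V ℝ) (hA : ∀ u v, 0 ≤ A u v) (f : ℕ → V → ℝ)
    (hf : ∀ i v, 0 ≤ f i v) (n k : ℕ) (v : V) : 0 ≤ wvec A f n k v := by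
  induction n generalizing k v with
  | zero =>
    cases k with
    | zero => simp only [wvec]; positivity
    | succ k => simp [wvec]
  | succ n ih =>
    cases k with
    | zero => exact sum_nonneg fun u _ => mul_nonneg (hA _ _) (ih _ _)
    | succ k =>
      exact sum_nonneg fun u _ => mul_nonneg (hA _ _)
        (add_nonneg (ih _ _) (mul_nonneg (hf _ _) (ih _ _)))

/-- The deviation of `wvec` from the constant vector with the same total mass. -/
noncomputable def wdev (A : Matrix V V ℝ) (f : ℕ → V → ℝ) (n k : ℕ) : V → ℝ :=
  fun v => wvec A f n k v - (∑ u, wvec A f n k u) / (Fintype.card V : ℝ)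

/-- Euclidean norm of a vector indexed by `V`. -/
noncomputable def eNorm (x : V → ℝ) : ℝ := ‖(WithLp.toLp 2 x : EuclideanSpace ℝ V)‖

lemma eNorm_sq (x : V → ℝ) : eNorm x ^ 2 = ∑ v, x v ^ 2 := by
  simp [eNorm, EuclideanSpace.norm_sq_eq]

lemma eNorm_nonneg (x : V → ℝ) : 0 ≤ eNorm x := norm_nonneg _

lemma eNorm_add_le (x y : V → ℝ) : eNorm (x + y) ≤ eNorm x + eNorm y := by
  simpa [eNorm] using norm_add_le (WithLp.toLp 2 x : EuclideanSpace ℝ V) (WithLp.toLp 2 y)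

lemma eNorm_smul (c : ℝ) (x : V → ℝ) : eNorm (c • x) = |c| * eNorm x := by
  simp [eNorm, norm_smul]

lemma sum_mul_le_eNorm (x y : V → ℝ) : ∑ v, x v * y v ≤ eNorm x * eNorm y := by
  have h := Finset.sum_mul_sq_le_sq_mul_sq univ x y
  rw [← eNorm_sq, ← eNorm_sq, ← mul_pow] at h
  exact (abs_le_of_sq_le_sq' h (mul_nonneg (eNorm_nonneg _) (eNorm_nonneg _))).2

lemma eNorm_mul_le (f x : V → ℝ) (hf : ∀ v, f v ∈ Set.Icc (0 : ℝ) 1) :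
    eNorm (f * x) ≤ eNorm x := by
  refine (abs_le_of_sq_le_sq' ?_ (eNorm_nonneg x)).2
  rw [eNorm_sq, eNorm_sq]
  refine sum_le_sum fun v _ => ?_
  obtain ⟨h0, h1⟩ := hf v
  rw [Pi.mul_apply, mul_pow]
  exact mul_le_of_le_one_left (sq_nonneg _) (pow_le_one₀ h0 h1)

lemma eNorm_mulVec_le [DecidableEq V] (M : Matrix V V ℝ) (x : V → ℝ) :
    eNorm (M.mulVec x) ≤ opNorm M * eNorm x := by
  have := (LinearMap.toContinuousLinearMap (Matrix.toEuclideanLin M)).le_opNorm (WithLp.toLp 2 x)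
  simpa [eNorm, opNorm] using this

lemma eNorm_le_sqrt [Nonempty V] (f : V → ℝ) (hf : ∀ v, f v ∈ Set.Icc (0 : ℝ) 1) :
    eNorm f ≤ √(Fintype.card V) * √((∑ v, f v) / (Fintype.card V : ℝ)) := by
  have hc : (0 : ℝ) < Fintype.card V := by exact_mod_cast Fintype.card_pos
  rw [← Real.sqrt_mul hc.le, mul_div_cancel₀ _ hc.ne']
  refine Real.le_sqrt_of_sq_le ?_
  rw [eNorm_sq]
  refine sum_le_sum fun v _ => ?_
  obtain ⟨h0, h1⟩ := hf v
  nlinarith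

lemma wvec_zero [Nonempty V] (A : Matrix V V ℝ) (hrow : ∀ u, ∑ v, A u v = 1) (f : ℕ → V → ℝ)
    (n : ℕ) : wvec A f n 0 = fun _ => 1 / (Fintype.card V : ℝ) := by
  induction n with
  | zero => rfl
  | succ n ih =>
    rw [wvec, ih]
    funext u
    simp only [Matrix.mulVec, dotProduct]
    rw [← sum_mul, hrow, one_mul]

/-- `E[e_k(f 0 (Y_0), …, f (n - 1) (Y_{n-1}))] ≤ R_k(μ_0 + ⋯ + μ_{n-1})`, by applying the scalar
recursion to the masses of `wvec` and the norms of `wdev`. -/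
lemma sum_wvec_le [DecidableEq V] [Nonempty V] (A J : Matrix V V ℝ) (hA : ∀ u v, 0 ≤ A u v)
    (hrow : ∀ u, ∑ v, A u v = 1) (hcol : ∀ v, ∑ u, A u v = 1)
    (hJ : ∀ u v, J u v = 1 / (Fintype.card V : ℝ)) (hlam1 : opNorm (A - J) < 1)
    (f : ℕ → V → ℝ) (hf : ∀ i v, f i v ∈ Set.Icc (0 : ℝ) 1) (n k : ℕ) :
    ∑ v, wvec A f n k v ≤ momBd (opNorm (A - J) / (1 - opNorm (A - J)))
      (∑ i ∈ range n, (∑ v, f i v) / (Fintype.card V : ℝ)) k := by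
  have hc : (0 : ℝ) < Fintype.card V := by exact_mod_cast Fintype.card_pos
  have h0 : 0 ≤ opNorm (A - J) := norm_nonneg _
  have hz := wvec_zero A hrow f
  have hdevz : ∀ n, wdev A f n 0 = 0 := by
    intro n; funext v; simp [wdev, hz, hc.ne']
  have hdev0 : ∀ k, wdev A f 0 k = 0 := by
    intro k
    cases k with
    | zero => exact hdevz 0
    | succ k => funext v; simp [wdev, wvec]
  have hnz : eNorm (0 : V → ℝ) = 0 := by simp [eNorm]
  refine scalar_bound h0 hlam1 (fun n k => ∑ v, wvec A f n k v)
    (fun n k => √(Fintype.card V) * eNorm (wdev A f n k))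
    (fun i => (∑ v, f i v) / (Fintype.card V : ℝ))
    (fun i => div_nonneg (sum_nonneg fun v _ => (hf i v).1) hc.le)
    (fun n k => sum_nonneg fun v _ => wvec_nonneg A hA f (fun i v => (hf i v).1) n k v)
    ?_ ?_ ?_ ?_ ?_ ?_ n k
  · intro n; simp [hz, hc.ne']
  · intro k; simp [wvec]
  · intro n; simp only [hdevz, hnz, mul_zero]
  · intro k; simp only [hdev0, hnz, mul_zero]
  · intro n k
    set e := ∑ v, wvec A f n k v with he
    have he0 : 0 ≤ e :=
      sum_nonneg fun v _ => wvec_nonneg A hA f (fun i v => (hf i v).1) n k v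
    -- `A - J` kills constants, so only the deviations and the source term contribute.
    have hstep : wdev A f (n + 1) (k + 1) = (A - J).mulVec
        (wdev A f n (k + 1) + f n * wdev A f n k + (e / Fintype.card V) • f n) := by
      have hconst : ∀ c : ℝ, (A - J).mulVec (fun _ => c) = 0 := by
        intro c
        funext u
        simp only [Matrix.mulVec, dotProduct, Matrix.sub_apply, ← sum_mul, sum_sub_distrib,
          hrow, hJ, Pi.zero_apply]
        simp [hc.ne']
      have hx : wvec A f n (k + 1) + f n * wvec A f n k
          = (wdev A f n (k + 1) + f n * wdev A f n k + (e / Fintype.card V) • f n)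
            + fun _ => (∑ u, wvec A f n (k + 1) u) / (Fintype.card V : ℝ) := by
        funext v
        simp only [wdev, Pi.add_apply, Pi.mul_apply, Pi.smul_apply, smul_eq_mul, ← he]
        ring
      have hJx : ∀ x : V → ℝ, J.mulVec x = fun _ => (∑ u, x u) / (Fintype.card V : ℝ) := by
        intro x
        funext u
        simp only [Matrix.mulVec, dotProduct, hJ, ← mul_sum]
        ring
      have h1 : wdev A f (n + 1) (k + 1)
          = (A - J).mulVec (wvec A f n (k + 1) + f n * wvec A f n k) := by
        rw [Matrix.sub_mulVec, hJx]
        funext v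
        simp only [wdev, wvec, sum_mulVec A hcol, Pi.sub_apply]
      rw [h1, hx, Matrix.mulVec_add, hconst, add_zero]
    have hb : eNorm (wdev A f (n + 1) (k + 1)) ≤ opNorm (A - J) *
        (eNorm (wdev A f n (k + 1)) + eNorm (wdev A f n k) + e / Fintype.card V *
          (√(Fintype.card V) * √((∑ v, f n v) / (Fintype.card V : ℝ)))) := by
      rw [hstep]
      refine (eNorm_mulVec_le _ _).trans (mul_le_mul_of_nonneg_left ?_ h0)
      refine (eNorm_add_le _ _).trans (add_le_add ((eNorm_add_le _ _).trans
        (add_le_add le_rfl (eNorm_mul_le _ _ (hf n)))) ?_)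
      rw [eNorm_smul, abs_of_nonneg (by positivity)]
      exact mul_le_mul_of_nonneg_left (eNorm_le_sqrt _ (hf n)) (by positivity)
    refine (mul_le_mul_of_nonneg_left hb (Real.sqrt_nonneg (Fintype.card V : ℝ))).trans
      (le_of_eq ?_)
    have hs : √(Fintype.card V : ℝ) * √(Fintype.card V : ℝ) = Fintype.card V :=
      Real.mul_self_sqrt hc.le
    have hs' : √(Fintype.card V : ℝ) * (e / Fintype.card V *
        (√(Fintype.card V) * √((∑ v, f n v) / (Fintype.card V : ℝ))))
        = e * √((∑ v, f n v) / (Fintype.card V : ℝ)) := by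
      rw [show ∀ a b c d : ℝ, a * (b / c * (a * d)) = (a * a) * (b / c) * d by intros; ring, hs]
      field_simp
    rw [mul_left_comm, mul_add _ (_ + _), hs']
    ring
  · intro n k
    have h1 : ∑ v, f n v * wdev A f n k v
        ≤ √((∑ v, f n v) / (Fintype.card V : ℝ)) * (√(Fintype.card V) * eNorm (wdev A f n k)) := by
      refine (sum_mul_le_eNorm _ _).trans ?_
      refine (mul_le_mul_of_nonneg_right (eNorm_le_sqrt _ (hf n)) (eNorm_nonneg _)).trans
        (le_of_eq (by ring))
    have h2 : ∑ v, wvec A f (n + 1) (k + 1) v = ∑ v, wvec A f n (k + 1) v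
        + (∑ v, f n v) / (Fintype.card V : ℝ) * ∑ v, wvec A f n k v
        + ∑ v, f n v * wdev A f n k v := by
      rw [wvec, sum_mulVec A hcol]
      simp only [Pi.add_apply, Pi.mul_apply, sum_add_distrib, wdev, mul_sub, sum_sub_distrib,
        ← sum_mul]
      ring
    rw [h2]
    linarith

end Walk

/-! ### Conclusion -/

theorem expander_moment_bound
    {V : Type*} [Fintype V] [DecidableEq V] [Nonempty V]
    (G : SimpleGraph V) [DecidableRel G.Adj] (d : ℕ) (hd : 0 < d)
    (hreg : G.IsRegularOfDegree d)
    (A : Matrix V V ℝ)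
    (hA : ∀ u v, A u v = if G.Adj u v then (1 : ℝ) / d else 0)
    (J : Matrix V V ℝ) (hJ : ∀ u v, J u v = 1 / (Fintype.card V : ℝ))
    (lam : ℝ) (hlam : lam = opNorm (A - J)) (hlam1 : lam < 1)
    (n : ℕ) (f : Fin n → V → ℝ) (hf : ∀ i v, f i v ∈ Set.Icc (0 : ℝ) 1)
    (μ : Fin n → ℝ) (hμ : ∀ i, μ i = (∑ v, f i v) / (Fintype.card V : ℝ))
    (Φ : ℝ) (hΦ : Φ = ∑ i, μ i)
    (q : ℕ) (hq : 0 < q) :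
    walkExp A (fun y => (∑ i, f i (y i)) ^ q) ≤
      ∑ k ∈ Finset.Icc 1 q,
        (stirling2 q k : ℝ) * (Nat.factorial k : ℝ) *
          ∑ i ∈ Finset.range k,
            (Nat.choose (k - 1) i : ℝ) * Φ ^ (i + 1) * lam ^ (k - i - 1) /
              ((Nat.factorial (i + 1) : ℝ) * (1 - lam) ^ (k - i - 1)) := by
  classical
  have hcol : ∀ v, ∑ u, A v u = 1 := by
    intro v
    have hd' : (d : ℝ) ≠ 0 := by exact_mod_cast hd.ne'
    have hdeg := hreg v
    rw [← SimpleGraph.card_neighborFinset_eq_degree, SimpleGraph.neighborFinset_eq_filter] at hdeg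
    simp only [hA]
    rw [← sum_filter, sum_const, hdeg, nsmul_eq_mul, mul_one_div_cancel hd']
  have hsym : ∀ u v, A u v = A v u := by
    intro u v
    simp only [hA, G.adj_comm]
  have hA0 : ∀ u v, 0 ≤ A u v := by
    intro u v
    rw [hA]
    split_ifs <;> positivity
  have hprob : ∀ y : Fin n → V, 0 ≤ walkProb A y := by
    intro y
    unfold walkProb
    split_ifs
    · exact zero_le_one
    · refine mul_nonneg (by positivity) (prod_nonneg fun i _ => ?_)
      split_ifs
      · exact hA0 _ _
      · exact zero_le_one
  -- Extension of `f` by zero to all positions.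
  let f' : ℕ → V → ℝ := fun i v => if h : i < n then f ⟨i, h⟩ v else 0
  have hff : ∀ (i : Fin n) v, f' i v = f i v := fun i v => by simp [f']
  have hf' : ∀ i v, f' i v ∈ Set.Icc (0 : ℝ) 1 := by
    intro i v
    simp only [f']
    split_ifs
    · exact hf _ _
    · simp
  have hΦ' : Φ = ∑ i ∈ range n, (∑ v, f' i v) / (Fintype.card V : ℝ) := by
    rw [hΦ, ← Fin.sum_univ_eq_sum_range (fun i => (∑ v, f' i v) / (Fintype.card V : ℝ))]
    exact sum_congr rfl fun i _ => by rw [hμ]; simp only [hff]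
  have hsymm : ∀ k, walkExp A (fun y => elemSym n (fun i => f i (y i)) k)
      ≤ momBd (lam / (1 - lam)) Φ k := by
    intro k
    have h1 := walkExp_elemSym A hsym (fun v => by simpa only [hsym _ v] using hcol v) f' n k
    simp only [hff] at h1
    rw [h1, hlam, hΦ']
    exact sum_wvec_le A J hA0 hcol (fun v => by simpa only [hsym _ v] using hcol v) hJ
      (hlam ▸ hlam1) f' hf' n k
  have hpow : walkExp A (fun y => (∑ i, f i (y i)) ^ q) ≤
      ∑ k ∈ range (q + 1), (stirling2 q k : ℝ) * (Nat.factorial k : ℝ) *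
        walkExp A (fun y => elemSym n (fun i => f i (y i)) k) := by
    unfold walkExp
    simp only [mul_sum]
    rw [sum_comm]
    refine sum_le_sum fun y _ => ?_
    refine (mul_le_mul_of_nonneg_left (pow_sum_le n (fun i => f i (y i)) (fun i => hf _ _) q)
      (hprob y)).trans (le_of_eq ?_)
    rw [mul_sum]
    exact sum_congr rfl fun k _ => by ring
  refine hpow.trans ?_
  obtain ⟨q, rfl⟩ := Nat.exists_eq_succ_of_ne_zero hq.ne'
  rw [sum_range_succ', ← Finset.Ico_add_one_right_eq_Icc, Finset.sum_Ico_eq_sum_range]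
  simp only [Nat.succ_eq_add_one, stirling2, Nat.cast_zero, zero_mul, add_zero,
    Nat.add_sub_cancel]
  refine sum_le_sum fun k _ => ?_
  rw [add_comm 1 k]
  refine mul_le_mul_of_nonneg_left ((hsymm (k + 1)).trans (le_of_eq ?_)) (by positivity)
  refine sum_congr rfl fun i _ => ?_
  rw [Nat.add_sub_cancel, show k + 1 - i - 1 = k - i by omega, div_pow]
  have : (1 - lam) ^ (k - i) ≠ 0 := pow_ne_zero _ (by linarith)
  field_simp
end

section
/- Let G = (V, E) be a finite regular undirected graph with normalized adjacency matrix A and λ = ‖A − J‖. Let f_1, …, f_n : V → [0, 1] with a common mean μ = E_{v uniform}[f_i(v)] for all i. Let (Y_1, …, Y_n) be the simple random walk on G and Z_i = f_i(Y_i). Then for all k ≥ 1 and all w ∈ [n]^k with w_1 ≤ w_2 ≤ ⋯ ≤ w_k, E[Z_{w_1} Z_{w_2} ⋯ Z_{w_k}] ≤ μ · ∏_{i=1}^{k−1} ((1 − λ^{w_{i+1} − w_i}) μ + λ^{w_{i+1} − w_i}). -/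
/-!
The expectation is a matrix product. Peeling off the times one by one gives
`E[h₀(Y_{w₀}) ⋯ h_m(Y_{w_m})] = N⁻¹ 1ᵀ A^{w₀} D₀ A^{w₁ - w₀} D₁ ⋯ D_m 1`, where `D_j` is the diagonal
matrix of `h_j` and `N = |V|`. Since `A` is doubly stochastic, the factor `A^{w₀}` is absorbed by
`1ᵀ`. Writing `D_j = √D_j √D_j`, the expectation becomes `N⁻¹` times
`√h₀ᵀ (√D₀ A^{δ₁} √D₁) ⋯ (√D_{m-1} A^{δ_m} √D_m) √h_m`, with `‖√h_j‖² = N μ`, so it remains to bound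
the operator norm of each block `√D A^δ √D'` by `(1 - λ^δ) μ + λ^δ`.

For this, `A^δ = (1 - λ^δ) J + λ^δ E` with `‖E‖ ≤ 1`, because `A^δ` fixes constants and contracts the
mean-zero vectors by `λ^δ` (`norm_mix_le`). The matrix `√D J √D' = N⁻¹ √h √h'ᵀ` has norm `μ`, the
entries of `√D`, `√D'` are at most `1`, and `1 - λ^δ ≥ 0` as `λ ≤ 1` (`opNorm_sub_le_one`); the block
bound is `block_bound`, and `exists_suffix_vector` runs the induction over times and factors.
-/

open Finset

namespace WalkBound

/-! ### Euclidean norm of real functions on a finite set -/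

/-- The Euclidean norm of a real function on a finite type. -/
noncomputable def l2 {V : Type*} [Fintype V] (x : V → ℝ) : ℝ := ‖WithLp.toLp 2 x‖

section L2
variable {V : Type*} [Fintype V]

lemma l2_nonneg (x : V → ℝ) : 0 ≤ l2 x := norm_nonneg _

lemma l2_sq (x : V → ℝ) : l2 x ^ 2 = ∑ v, x v ^ 2 := by
  simp [l2, EuclideanSpace.norm_sq_eq]

lemma l2_add_le (x y : V → ℝ) : l2 (x + y) ≤ l2 x + l2 y := by
  simpa [l2, WithLp.toLp_add] using norm_add_le (WithLp.toLp 2 x) (WithLp.toLp 2 y)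

lemma l2_smul (c : ℝ) (x : V → ℝ) : l2 (c • x) = |c| * l2 x := by
  simp [l2, WithLp.toLp_smul, norm_smul]

lemma l2_le_of_sq_le {x : V → ℝ} {b : ℝ} (hb : 0 ≤ b) (h : ∑ v, x v ^ 2 ≤ b ^ 2) : l2 x ≤ b := by
  rw [← l2_sq] at h
  exact le_of_sq_le_sq h hb

lemma abs_sum_mul_le (x y : V → ℝ) : |∑ v, x v * y v| ≤ l2 x * l2 y := by
  refine abs_le_of_sq_le_sq ?_ (mul_nonneg (l2_nonneg x) (l2_nonneg y))
  rw [mul_pow, l2_sq, l2_sq]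
  exact sum_mul_sq_le_sq_mul_sq univ x y

lemma l2_mul_le {a : V → ℝ} (ha : ∀ v, a v ∈ Set.Icc (0 : ℝ) 1) (x : V → ℝ) :
    l2 (fun v => a v * x v) ≤ l2 x := by
  refine l2_le_of_sq_le (l2_nonneg x) ?_
  rw [l2_sq]
  refine sum_le_sum fun v _ => ?_
  rw [mul_pow]
  have : a v ^ 2 ≤ 1 := pow_le_one₀ (ha v).1 (ha v).2
  nlinarith [sq_nonneg (x v)]

lemma l2_sqrt_sq {a : V → ℝ} (ha : ∀ v, 0 ≤ a v) : l2 (fun v => √(a v)) ^ 2 = ∑ v, a v := by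
  rw [l2_sq]
  exact sum_congr rfl fun v _ => Real.sq_sqrt (ha v)

omit [Fintype V] in
lemma sqrt_mem {a : V → ℝ} (ha : ∀ v, a v ∈ Set.Icc (0 : ℝ) 1) (v : V) :
    √(a v) ∈ Set.Icc (0 : ℝ) 1 :=
  ⟨Real.sqrt_nonneg _, Real.sqrt_le_one.2 (ha v).2⟩

/-- Pythagoras for a constant vector and a mean-zero vector. -/
lemma l2_const_add_sq (c : ℝ) {x : V → ℝ} (hx : ∑ v, x v = 0) :
    l2 (fun v => c + x v) ^ 2 = Fintype.card V * c ^ 2 + l2 x ^ 2 := by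
  simp only [l2_sq, add_sq, sum_add_distrib, ← mul_sum, hx]
  simp

/-- The mean of a function with respect to the uniform distribution. -/
noncomputable def mean (x : V → ℝ) : ℝ := (∑ v, x v) / Fintype.card V

lemma sum_sub_mean [Nonempty V] (x : V → ℝ) : ∑ v, (x v - mean x) = 0 := by
  have : (Fintype.card V : ℝ) ≠ 0 := by simp
  simp [sum_sub_distrib, mean]
  field_simp
  simp

lemma l2_sq_eq_mean [Nonempty V] (x : V → ℝ) :
    l2 x ^ 2 = Fintype.card V * mean x ^ 2 + l2 (fun v => x v - mean x) ^ 2 := by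
  rw [← l2_const_add_sq _ (sum_sub_mean x)]
  simp

end L2

/-! ### Doubly stochastic matrices and their powers -/

section Stoch
variable {V : Type*} [Fintype V] [DecidableEq V] {A : Matrix V V ℝ}

omit [DecidableEq V] in
lemma sum_mulVec (hcol : ∀ u, ∑ v, A v u = 1) (x : V → ℝ) :
    ∑ v, (A.mulVec x) v = ∑ v, x v := by
  simp only [Matrix.mulVec, dotProduct]
  rw [sum_comm]
  simp [← sum_mul, hcol]

lemma sum_pow_mulVec (hcol : ∀ u, ∑ v, A v u = 1) (k : ℕ) (x : V → ℝ) :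
    ∑ v, ((A ^ k).mulVec x) v = ∑ v, x v := by
  induction k with
  | zero => simp
  | succ k ih => rw [pow_succ', ← Matrix.mulVec_mulVec, sum_mulVec hcol, ih]

lemma pow_mulVec_const (hrow : ∀ u, ∑ v, A u v = 1) (k : ℕ) (c : ℝ) :
    (A ^ k).mulVec (fun _ => c) = fun _ => c := by
  induction k with
  | zero => simp
  | succ k ih =>
    rw [pow_succ', ← Matrix.mulVec_mulVec, ih]
    ext v
    simp [Matrix.mulVec, dotProduct, ← sum_mul, hrow]

omit [DecidableEq V] in
lemma l2_mulVec_le (h0 : ∀ u v, 0 ≤ A u v) (hrow : ∀ u, ∑ v, A u v = 1)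
    (hcol : ∀ u, ∑ v, A v u = 1) (x : V → ℝ) : l2 (A.mulVec x) ≤ l2 x := by
  refine l2_le_of_sq_le (l2_nonneg x) ?_
  have h : ∀ v, (A.mulVec x) v ^ 2 ≤ ∑ u, A v u * x u ^ 2 := by
    intro v
    have := sum_sq_le_sum_mul_sum_of_sq_le_mul univ (r := fun u => A v u * x u)
      (f := fun u => A v u) (g := fun u => A v u * x u ^ 2)
      (fun u _ => h0 v u) (fun u _ => mul_nonneg (h0 v u) (sq_nonneg _))
      (fun u _ => le_of_eq (by ring))
    rwa [hrow, one_mul] at this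
  calc _ ≤ ∑ v, ∑ u, A v u * x u ^ 2 := sum_le_sum fun v _ => h v
    _ = l2 x ^ 2 := by
      rw [sum_comm, l2_sq]
      simp [← sum_mul, hcol]

variable {J : Matrix V V ℝ}

omit [DecidableEq V] in
lemma J_mulVec (hJ : ∀ u v, J u v = 1 / (Fintype.card V : ℝ)) (x : V → ℝ) :
    J.mulVec x = fun _ => mean x := by
  ext v
  simp only [Matrix.mulVec, dotProduct, hJ, mean, ← mul_sum]
  ring

lemma l2_sub_mulVec_le (x : V → ℝ) : l2 ((A - J).mulVec x) ≤ opNorm (A - J) * l2 x :=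
  (LinearMap.toContinuousLinearMap (Matrix.toEuclideanLin (A - J))).le_opNorm (WithLp.toLp 2 x)

lemma opNorm_sub_le_one [Nonempty V] (h0 : ∀ u v, 0 ≤ A u v) (hrow : ∀ u, ∑ v, A u v = 1)
    (hcol : ∀ u, ∑ v, A v u = 1) (hJ : ∀ u v, J u v = 1 / (Fintype.card V : ℝ)) :
    opNorm (A - J) ≤ 1 := by
  refine ContinuousLinearMap.opNorm_le_bound _ zero_le_one fun x => ?_
  rw [one_mul]
  change l2 ((A - J).mulVec (WithLp.ofLp x)) ≤ l2 (WithLp.ofLp x)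
  generalize WithLp.ofLp x = z
  -- `(A - J) z` is `A` applied to the mean-zero part of `z`.
  have e : (A - J).mulVec z = A.mulVec (fun v => z v - mean z) := by
    have h1 := pow_mulVec_const hrow 1 (mean z)
    rw [pow_one] at h1
    rw [Matrix.sub_mulVec, J_mulVec hJ, ← h1, ← Matrix.mulVec_sub]
    rfl
  rw [e]
  refine (l2_mulVec_le h0 hrow hcol _).trans ?_
  refine le_of_sq_le_sq ?_ (l2_nonneg z)
  rw [l2_sq_eq_mean z]
  have : 0 ≤ (Fintype.card V : ℝ) * mean z ^ 2 := by positivity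
  linarith

lemma opNorm_nonneg (M : Matrix V V ℝ) : 0 ≤ opNorm M := norm_nonneg _

lemma l2_pow_mulVec_le (hcol : ∀ u, ∑ v, A v u = 1)
    (hJ : ∀ u v, J u v = 1 / (Fintype.card V : ℝ)) (k : ℕ) {x : V → ℝ} (hx : ∑ v, x v = 0) :
    l2 ((A ^ k).mulVec x) ≤ opNorm (A - J) ^ k * l2 x := by
  induction k with
  | zero => simp
  | succ k ih =>
    have hz : ∑ v, ((A ^ k).mulVec x) v = 0 := by rw [sum_pow_mulVec hcol, hx]
    have e : (A ^ (k + 1)).mulVec x = (A - J).mulVec ((A ^ k).mulVec x) := by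
      rw [pow_succ', ← Matrix.mulVec_mulVec, Matrix.sub_mulVec, J_mulVec hJ, mean, hz]
      ext v
      simp
    rw [e, pow_succ', mul_assoc]
    exact (l2_sub_mulVec_le _).trans (mul_le_mul_of_nonneg_left ih (opNorm_nonneg _))

/-- The matrix `A ^ k - (1 - λ ^ k) J` has operator norm at most `λ ^ k`: it multiplies constants by
`λ ^ k` and acts as `A ^ k` on mean-zero vectors. -/
lemma norm_mix_le [Nonempty V] (hcol : ∀ u, ∑ v, A v u = 1) (hrow : ∀ u, ∑ v, A u v = 1)
    (hJ : ∀ u v, J u v = 1 / (Fintype.card V : ℝ)) (k : ℕ) (x : V → ℝ) :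
    l2 (fun v => ((A ^ k).mulVec x) v - (1 - opNorm (A - J) ^ k) * mean x) ≤
      opNorm (A - J) ^ k * l2 x := by
  set L := opNorm (A - J) ^ k with hL
  have hL0 : 0 ≤ L := pow_nonneg (opNorm_nonneg _) k
  have e : (fun v => ((A ^ k).mulVec x) v - (1 - L) * mean x) =
      fun v => L * mean x + ((A ^ k).mulVec (fun v => x v - mean x)) v := by
    have h : (A ^ k).mulVec (fun v => x v - mean x) = (A ^ k).mulVec x - fun _ => mean x := by
      conv_rhs => rw [← pow_mulVec_const hrow k (mean x), ← Matrix.mulVec_sub]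
      rfl
    ext v
    rw [h, Pi.sub_apply]
    ring
  have hs := l2_pow_mulVec_le hcol hJ k (sum_sub_mean x)
  refine le_of_sq_le_sq ?_ (mul_nonneg hL0 (l2_nonneg x))
  rw [e, l2_const_add_sq _ (by rw [sum_pow_mulVec hcol, sum_sub_mean]), mul_pow L (l2 x), l2_sq_eq_mean x, mul_pow]
  have := pow_le_pow_left₀ (l2_nonneg _) hs 2
  rw [mul_pow] at this
  linarith

/-- Norm bound for the block `√D A^k √D'`, where `D`, `D'` are the diagonal matrices of two
`[0, 1]`-valued functions of mean `μ`. -/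
lemma block_bound [Nonempty V] (h0 : ∀ u v, 0 ≤ A u v) (hrow : ∀ u, ∑ v, A u v = 1)
    (hcol : ∀ u, ∑ v, A v u = 1) (hJ : ∀ u v, J u v = 1 / (Fintype.card V : ℝ))
    {a b : V → ℝ} (ha : ∀ v, a v ∈ Set.Icc (0 : ℝ) 1) (hb : ∀ v, b v ∈ Set.Icc (0 : ℝ) 1)
    {μ : ℝ} (hμa : mean a = μ) (hμb : mean b = μ) (k : ℕ) (x : V → ℝ) :
    l2 (fun v => √(a v) * ((A ^ k).mulVec (fun u => √(b u) * x u)) v) ≤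
      ((1 - opNorm (A - J) ^ k) * μ + opNorm (A - J) ^ k) * l2 x := by
  have hmix := norm_mix_le hcol hrow hJ k (fun u => √(b u) * x u)
  have hL1 : opNorm (A - J) ^ k ≤ 1 :=
    pow_le_one₀ (opNorm_nonneg _) (opNorm_sub_le_one h0 hrow hcol hJ)
  have hL0 : 0 ≤ opNorm (A - J) ^ k := pow_nonneg (opNorm_nonneg _) k
  set L := opNorm (A - J) ^ k
  set z := fun u => √(b u) * x u with hz
  have hN : (0 : ℝ) < Fintype.card V := by exact_mod_cast Fintype.card_pos
  have hab : l2 (fun v => √(a v)) = l2 (fun v => √(b v)) := by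
    refine (sq_eq_sq₀ (l2_nonneg _) (l2_nonneg _)).1 ?_
    rw [l2_sqrt_sq fun v => (ha v).1, l2_sqrt_sq fun v => (hb v).1]
    rw [← hμb] at hμa
    exact (div_left_inj' hN.ne').1 hμa
  have hc : |mean z| * l2 (fun v => √(a v)) ≤ μ * l2 x := by
    have h1 : |∑ v, z v| ≤ l2 (fun v => √(b v)) * l2 x := abs_sum_mul_le _ _
    have h2 : l2 (fun v => √(b v)) ^ 2 = μ * Fintype.card V := by
      rw [l2_sqrt_sq fun v => (hb v).1, ← hμb, mean]
      field_simp
    rw [mean, abs_div, abs_of_pos hN, hab, div_mul_eq_mul_div, div_le_iff₀ hN]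
    calc _ ≤ (l2 (fun v => √(b v)) * l2 x) * l2 (fun v => √(b v)) :=
          mul_le_mul_of_nonneg_right h1 (l2_nonneg _)
      _ = l2 (fun v => √(b v)) ^ 2 * l2 x := by ring
      _ = _ := by rw [h2]; ring
  have e : (fun v => √(a v) * ((A ^ k).mulVec z) v) =
      ((1 - L) * mean z) • (fun v => √(a v)) +
        fun v => √(a v) * (((A ^ k).mulVec z) v - (1 - L) * mean z) := by
    ext v
    simp only [Pi.add_apply, Pi.smul_apply, smul_eq_mul]
    ring
  rw [e]
  refine (l2_add_le _ _).trans ?_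
  have h3 := (l2_mul_le (sqrt_mem ha) (fun v => ((A ^ k).mulVec z) v - (1 - L) * mean z)).trans hmix
  have h4 : l2 z ≤ l2 x := l2_mul_le (sqrt_mem hb) x
  rw [l2_smul, abs_mul, abs_of_nonneg (sub_nonneg.2 hL1), mul_assoc]
  have h5 := mul_le_mul_of_nonneg_left hc (sub_nonneg.2 hL1)
  have h6 := mul_le_mul_of_nonneg_left h4 hL0
  linarith

end Stoch

/-! ### Conditional expectation along the walk -/

section Walk
variable {V : Type*} [Fintype V]

/-- The expectation of `F` over the walk of length `n + 1` with transition matrix `A` started at a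
given vertex, defined by conditioning on the first step. -/
noncomputable def startExp (A : Matrix V V ℝ) : (n : ℕ) → ((Fin (n + 1) → V) → ℝ) → V → ℝ
  | 0, F, v => F fun _ => v
  | n + 1, F, v => ∑ u, A v u * startExp A n (fun y => F (Fin.cons v y)) u

lemma sum_fin_cons {n : ℕ} (H : (Fin (n + 1) → V) → ℝ) :
    ∑ y, H y = ∑ v, ∑ y : Fin n → V, H (Fin.cons v y) := by
  rw [← (Fin.consEquiv fun _ : Fin (n + 1) => V).sum_comp, Fintype.sum_prod_type]
  rfl

lemma sum_path_eq_startExp (A : Matrix V V ℝ) (n : ℕ) (F : (Fin (n + 1) → V) → ℝ) (v : V) :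
    ∑ y : Fin n → V, (∏ i : Fin (n + 1), if h : (i : ℕ) + 1 < n + 1 then
      A ((Fin.cons v y : Fin (n + 1) → V) i) ((Fin.cons v y : Fin (n + 1) → V) ⟨(i : ℕ) + 1, h⟩)
      else 1) * F (Fin.cons v y) = startExp A n F v := by
  induction n generalizing v with
  | zero =>
    simp only [startExp, Fintype.sum_unique]
    simp
    congr 1
    ext i
    rw [Fin.fin_one_eq_zero i]
    rfl
  | succ n ih =>
    rw [sum_fin_cons, startExp]
    refine sum_congr rfl fun u _ => ?_
    rw [← ih, mul_sum]
    refine sum_congr rfl fun y _ => ?_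
    rw [Fin.prod_univ_succ, ← mul_assoc]
    congr 2
    · refine prod_congr rfl fun i _ => ?_
      by_cases h : (i : ℕ) + 1 < n + 1
      · rw [dif_pos h, dif_pos (by simpa using h)]
        rfl
      · rw [dif_neg h, dif_neg (by simpa using h)]

lemma walkExp_eq (A : Matrix V V ℝ) (n : ℕ) (F : (Fin (n + 1) → V) → ℝ) :
    walkExp A F = mean (startExp A n F) := by
  have h : walkExp A F = 1 / (Fintype.card V : ℝ) * ∑ v, startExp A n F v := by
    simp only [walkExp, walkProb, Nat.succ_ne_zero, if_false, mul_assoc, ← mul_sum]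
    rw [sum_fin_cons]
    congr 1
    exact sum_congr rfl fun v _ => sum_path_eq_startExp A n F v
  rw [h, mean]
  ring

lemma startExp_mul (A : Matrix V V ℝ) (n : ℕ) (g : V → ℝ) (F : (Fin (n + 1) → V) → ℝ) (v : V) :
    startExp A n (fun y => g (y 0) * F y) v = g v * startExp A n F v := by
  have key : ∀ (n : ℕ) (c : ℝ) (F : (Fin (n + 1) → V) → ℝ) (v : V),
      startExp A n (fun y => c * F y) v = c * startExp A n F v := by
    intro n c
    induction n with
    | zero => intro F v; rfl
    | succ n ih =>
      intro F v
      simp only [startExp, ih, mul_sum]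
      exact sum_congr rfl fun u _ => by ring
  cases n with
  | zero => rfl
  | succ n =>
    simp only [startExp, Fin.cons_zero, key, mul_sum]
    exact sum_congr rfl fun u _ => by ring

lemma startExp_one {A : Matrix V V ℝ} (hrow : ∀ u, ∑ v, A u v = 1) (n : ℕ) (v : V) :
    startExp A n (fun _ => 1) v = 1 := by
  induction n generalizing v with
  | zero => rfl
  | succ n ih => simp [startExp, ih, hrow]

/-- Started at `v`, the walk has expected product `(A^{w₀} (√h₀ · X)) v`, where
`√h₀ · X = D₀ A^{w₁ - w₀} D₁ ⋯ D_m 1`, and `X` has norm at most `√(N μ)` times the product of the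
block bounds. If `w₀ = 0` the factor `h₀` is removed, otherwise the first step of the walk is. -/
lemma exists_suffix_vector [DecidableEq V] [Nonempty V] {A J : Matrix V V ℝ}
    (h0 : ∀ u v, 0 ≤ A u v) (hrow : ∀ u, ∑ v, A u v = 1)
    (hcol : ∀ u, ∑ v, A v u = 1) (hJ : ∀ u v, J u v = 1 / (Fintype.card V : ℝ)) {μ : ℝ}
    (hμ0 : 0 ≤ μ) :
    ∀ (n m : ℕ) (h : Fin (m + 1) → V → ℝ) (_ : ∀ j v, h j v ∈ Set.Icc (0 : ℝ) 1)
      (_ : ∀ j, mean (h j) = μ) (w : Fin (m + 1) → Fin (n + 1)) (_ : Monotone w),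
      ∃ X : V → ℝ,
        l2 X ≤ √(Fintype.card V * μ) * ∏ i : Fin m,
          ((1 - opNorm (A - J) ^ ((w i.succ : ℕ) - (w i.castSucc : ℕ))) * μ +
            opNorm (A - J) ^ ((w i.succ : ℕ) - (w i.castSucc : ℕ))) ∧
        startExp A n (fun y => ∏ j, h j (y (w j))) =
          (A ^ (w 0 : ℕ)).mulVec (fun v => √(h 0 v) * X v) := by
  intro n m h hh hmean w hw
  by_cases hw0 : w 0 = 0
  · cases m with
    | zero =>
      refine ⟨fun v => √(h 0 v), ?_, ?_⟩
      · refine le_of_eq ?_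
        have hN : (Fintype.card V : ℝ) ≠ 0 := by simp
        rw [Fin.prod_univ_zero, mul_one, ← Real.sqrt_sq (l2_nonneg _),
          l2_sqrt_sq fun v => (hh 0 v).1, ← hmean 0, mean, mul_div_cancel₀ _ hN]
      · ext v
        have := startExp_mul A n (h 0) (fun _ => 1) v
        simp only [Fin.prod_univ_succ, Fin.prod_univ_zero, hw0, this, startExp_one hrow]
        simp [Real.mul_self_sqrt (hh 0 v).1]
    | succ m =>
      obtain ⟨X, hX, hE⟩ := exists_suffix_vector h0 hrow hcol hJ hμ0 n m (fun j => h j.succ)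
        (fun j => hh j.succ) (fun j => hmean j.succ) (fun j => w j.succ)
        (fun i j hij => hw (Fin.succ_le_succ_iff.2 hij))
      refine ⟨fun v => √(h 0 v) *
        ((A ^ (w (Fin.succ 0) : ℕ)).mulVec (fun v => √(h (Fin.succ 0) v) * X v)) v, ?_, ?_⟩
      · refine (block_bound h0 hrow hcol hJ (hh 0) (hh _) (hmean 0) (hmean _) _ X).trans ?_
        have hc : 0 ≤ (1 - opNorm (A - J) ^ (w (Fin.succ 0) : ℕ)) * μ +
            opNorm (A - J) ^ (w (Fin.succ 0) : ℕ) := by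
          have hL1 : opNorm (A - J) ^ (w (Fin.succ 0) : ℕ) ≤ 1 :=
            pow_le_one₀ (opNorm_nonneg _) (opNorm_sub_le_one h0 hrow hcol hJ)
          exact add_nonneg (mul_nonneg (sub_nonneg.2 hL1) hμ0) (pow_nonneg (opNorm_nonneg _) _)
        refine (mul_le_mul_of_nonneg_left hX hc).trans (le_of_eq ?_)
        rw [Fin.prod_univ_succ]
        simp only [Fin.castSucc_zero, hw0, Fin.val_zero, Nat.sub_zero, Fin.castSucc_succ]
        ring
      · ext v
        have := startExp_mul A n (h 0) (fun y => ∏ j : Fin (m + 1), h j.succ (y (w j.succ))) v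
        simp only [Fin.prod_univ_succ (n := m + 1), hw0, this, hE]
        simp [← mul_assoc, Real.mul_self_sqrt (hh 0 v).1]
  · cases n with
    | zero => exact absurd (Fin.fin_one_eq_zero _) hw0
    | succ n =>
      have hne : ∀ j, w j ≠ 0 := fun j hj =>
        hw0 (Fin.le_zero_iff.1 (hj ▸ hw (Fin.zero_le j)))
      choose w' hw' using fun j => Fin.exists_succ_eq.2 (hne j)
      obtain ⟨X, hX, hE⟩ := exists_suffix_vector h0 hrow hcol hJ hμ0 n m h hh hmean w'
        (fun i j hij => Fin.succ_le_succ_iff.1 (by rw [hw', hw']; exact hw hij))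
      refine ⟨X, ?_, ?_⟩
      · simpa only [← hw', Fin.val_succ, Nat.add_sub_add_right] using hX
      · ext v
        rw [← hw' 0, Fin.val_succ, pow_succ', ← Matrix.mulVec_mulVec, ← hE]
        simp only [startExp, ← hw', Fin.cons_succ]
        rfl
  termination_by n m => n + m

end Walk

end WalkBound

open WalkBound in
theorem expander_monomial_bound_common_mean
    {V : Type*} [Fintype V] [DecidableEq V] [Nonempty V]
    (G : SimpleGraph V) [DecidableRel G.Adj] (d : ℕ) (hd : 0 < d)
    (hreg : G.IsRegularOfDegree d)
    (A : Matrix V V ℝ)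
    (hA : ∀ u v, A u v = if G.Adj u v then (1 : ℝ) / d else 0)
    (J : Matrix V V ℝ) (hJ : ∀ u v, J u v = 1 / (Fintype.card V : ℝ))
    (lam : ℝ) (hlam : lam = opNorm (A - J))
    (n : ℕ) (f : Fin n → V → ℝ) (hf : ∀ i v, f i v ∈ Set.Icc (0 : ℝ) 1)
    (μ : ℝ) (hμ : ∀ i, (∑ v, f i v) / (Fintype.card V : ℝ) = μ)
    (m : ℕ) (w : Fin (m + 1) → Fin n) (hw : Monotone w) :
    walkExp A (fun y => ∏ j, f (w j) (y (w j))) ≤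
      μ * ∏ i : Fin m,
        ((1 - lam ^ ((w i.succ : ℕ) - (w i.castSucc : ℕ))) * μ +
          lam ^ ((w i.succ : ℕ) - (w i.castSucc : ℕ))) := by
  have hd' : (d : ℝ) ≠ 0 := by exact_mod_cast hd.ne'
  have h0 : ∀ u v, 0 ≤ A u v := fun u v => by
    rw [hA]
    positivity
  have hrow : ∀ u, ∑ v, A u v = 1 := fun u => by
    simp only [hA]
    rw [← sum_filter, sum_const, ← G.neighborFinset_eq_filter, G.card_neighborFinset_eq_degree,
      hreg.degree_eq, nsmul_eq_mul]
    field_simp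
  have hcol : ∀ u, ∑ v, A v u = 1 := fun u => by
    rw [← hrow u]
    exact sum_congr rfl fun v _ => by simp only [hA, G.adj_comm]
  have hμ0 : 0 ≤ μ := by
    rw [← hμ (w 0)]
    exact div_nonneg (sum_nonneg fun v _ => (hf _ v).1) (Nat.cast_nonneg _)
  have hN : (0 : ℝ) < Fintype.card V := by exact_mod_cast Fintype.card_pos
  subst hlam
  cases n with
  | zero => exact (w 0).elim0
  | succ n =>
    obtain ⟨X, hX, hE⟩ := exists_suffix_vector h0 hrow hcol hJ hμ0 n m (fun j => f (w j))
      (fun j => hf _) (fun j => hμ _) w hw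
    rw [walkExp_eq, hE, mean, sum_pow_mulVec hcol, div_le_iff₀ hN]
    have h1 := (le_abs_self _).trans (abs_sum_mul_le (fun v => √(f (w 0) v)) X)
    have h2 : l2 (fun v => √(f (w 0) v)) = √(Fintype.card V * μ) := by
      rw [← Real.sqrt_sq (l2_nonneg _), l2_sqrt_sq fun v => (hf _ v).1, ← hμ (w 0),
        mul_div_cancel₀ _ hN.ne']
    rw [h2] at h1
    refine h1.trans ((mul_le_mul_of_nonneg_left hX (Real.sqrt_nonneg _)).trans (le_of_eq ?_))
    rw [← mul_assoc, Real.mul_self_sqrt (by positivity)]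
    ring
end
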